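/- Let P_k = 𝓛_k + V_k (k = 1,2) be two Schrödinger operators on ℝ^d as in the context, with λ_k* their generalized principal eigenvalues. Assume: a₁ = a₂ and b₁ = b₂ outside a compact subset of ℝ^d; V₁(x) − V₂(x) → 0 as |x| → ∞; λ₁* is strictly monotone at V₁ (so 𝓛₁ + V₁ − λ₁* admits a ground state Ψ₁*); λ₂* ≤ λ₁*; and there exist a C² function Ψ (possibly sign-changing) with Ψ⁺ not identically zero and C > 0 such that 𝓛₂Ψ + V₂Ψ ≥ λ₁*Ψ on ℝ^d and Ψ⁺(x) ≤ C Ψ₁*(x) for all x ∈ ℝ^d. Then λ₂* is strictly monotone at V₂, λ₁* = λ₂*, the operator 𝓛₂ + V₂ − λ₂* is critical in ℝ^d, and Ψ is a positive scalar multiple of its ground state (in particular Ψ > 0). -/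

import Mathlib

open Metric Set Filter

noncomputable section

/-- `ℝ^d` as a Euclidean space. -/
abbrev Euc (d : ℕ) := EuclideanSpace ℝ (Fin d)

/-- First partial derivative `∂u/∂xᵢ`. -/
def pd {d : ℕ} (u : Euc d → ℝ) (i : Fin d) (x : Euc d) : ℝ :=
  fderiv ℝ u x (EuclideanSpace.single i 1)

/-- Second partial derivative `∂²u/∂xᵢ∂xⱼ`. -/
def pd2 {d : ℕ} (u : Euc d → ℝ) (i j : Fin d) (x : Euc d) : ℝ :=
  fderiv ℝ (fun y => pd u j y) x (EuclideanSpace.single i 1)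

/-- The second-order operator `𝓛u = Σ aᶦʲ ∂ᵢⱼu + Σ bᶦ ∂ᵢu`. -/
def Lop {d : ℕ} (a : Euc d → Matrix (Fin d) (Fin d) ℝ) (b : Euc d → Euc d)
    (u : Euc d → ℝ) (x : Euc d) : ℝ :=
  (∑ i, ∑ j, a x i j * pd2 u i j x) + ∑ i, b x i * pd u i x

/-- Frobenius norm of a matrix. -/
def frob {d : ℕ} (m : Matrix (Fin d) (Fin d) ℝ) : ℝ :=
  Real.sqrt (∑ i, ∑ j, (m i j) ^ 2)

/-- The quadratic form `⟨ξ, m ξ⟩`. -/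
def quadForm {d : ℕ} (m : Matrix (Fin d) (Fin d) ℝ) (ξ : Euc d) : ℝ :=
  ∑ i, ∑ j, m i j * ξ i * ξ j

/-- Local Hölder continuity on a set. -/
def LocallyHolderOn {E F : Type*} [PseudoMetricSpace E] [PseudoMetricSpace F]
    (f : E → F) (s : Set E) : Prop :=
  ∀ x ∈ s, ∃ (C r : NNReal), 0 < r ∧ r ≤ 1 ∧ ∃ ε > 0, HolderOnWith C r f (Metric.ball x ε ∩ s)

/-- Local Hölder continuity. -/
def LocallyHolder {E F : Type*} [PseudoMetricSpace E] [PseudoMetricSpace F] (f : E → F) : Prop :=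
  LocallyHolderOn f Set.univ

/-- The set of `λ ∈ ℝ` admitting a positive C² supersolution of `𝓛φ + Vφ ≤ λφ` on `D`. -/
def supersolutions {d : ℕ} (a : Euc d → Matrix (Fin d) (Fin d) ℝ) (b : Euc d → Euc d)
    (V : Euc d → ℝ) (D : Set (Euc d)) : Set ℝ :=
  {lam | ∃ φ : Euc d → ℝ, (∀ x ∈ D, 0 < φ x) ∧ ContDiffOn ℝ 2 φ D ∧
    ∀ x ∈ D, Lop a b φ x + V x * φ x ≤ lam * φ x}

/-- The generalized principal eigenvalue `λ*(𝓛,V)` on `D`. -/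
def lamStar {d : ℕ} (a : Euc d → Matrix (Fin d) (Fin d) ℝ) (b : Euc d → Euc d)
    (V : Euc d → ℝ) (D : Set (Euc d)) : ℝ :=
  sInf (supersolutions a b V D)

/-- `λ*(𝓛,V)` is finite: the defining set is nonempty and bounded below. -/
def lamStarFinite {d : ℕ} (a : Euc d → Matrix (Fin d) (Fin d) ℝ) (b : Euc d → Euc d)
    (V : Euc d → ℝ) (D : Set (Euc d)) : Prop :=
  (supersolutions a b V D).Nonempty ∧ BddBelow (supersolutions a b V D)

/-- A ground state of `𝓛 + W` in the open connected set `D`: a positive C² solution of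
minimal growth at infinity. -/
def IsGroundState {d : ℕ} (a : Euc d → Matrix (Fin d) (Fin d) ℝ) (b : Euc d → Euc d)
    (W : Euc d → ℝ) (u : Euc d → ℝ) (D : Set (Euc d)) : Prop :=
  (∀ x ∈ D, 0 < u x) ∧ ContDiffOn ℝ 2 u D ∧ (∀ x ∈ D, Lop a b u x + W x * u x = 0) ∧
  ∀ K : Set (Euc d), IsCompact K → K ⊆ D →
    ∀ v : Euc d → ℝ, ContDiffOn ℝ 2 v (D \ K) → (∀ x ∈ D \ K, 0 < v x) →
      (∀ x ∈ D \ K, Lop a b v x + W x * v x ≤ 0) →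
      ∃ K' : Set (Euc d), IsCompact K' ∧ K ⊆ K' ∧ K' ⊆ D ∧
        ∃ κ > 0, ∀ x ∈ D \ K', κ * u x ≤ v x

/-- Membership in `C₀⁺(ℝ^d)`: continuous, nonnegative, not identically zero, vanishing
at infinity. -/
def C0plus {d : ℕ} (h : Euc d → ℝ) : Prop :=
  Continuous h ∧ (∀ x, 0 ≤ h x) ∧ (∃ x, h x ≠ 0) ∧ Tendsto h (cocompact (Euc d)) (nhds 0)

/-- `λ*` is strictly monotone at `V` on the right. -/
def StrictMonoRight {d : ℕ} (a : Euc d → Matrix (Fin d) (Fin d) ℝ) (b : Euc d → Euc d)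
    (V : Euc d → ℝ) : Prop :=
  ∀ h : Euc d → ℝ, C0plus h →
    lamStar a b V Set.univ < lamStar a b (fun x => V x + h x) Set.univ

/-- `λ*` is strictly monotone at `V` (on both sides). -/
def StrictMonoAt {d : ℕ} (a : Euc d → Matrix (Fin d) (Fin d) ℝ) (b : Euc d → Euc d)
    (V : Euc d → ℝ) : Prop :=
  ∀ h : Euc d → ℝ, C0plus h →
    lamStar a b (fun x => V x - h x) Set.univ < lamStar a b V Set.univ ∧
    lamStar a b V Set.univ < lamStar a b (fun x => V x + h x) Set.univ

/-- Standing assumptions (A1)–(A3) with `b` Borel measurable and locally bounded. -/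
structure StandingB {d : ℕ} (a : Euc d → Matrix (Fin d) (Fin d) ℝ) (b : Euc d → Euc d) : Prop where
  posdef : ∀ x, (a x).PosDef
  aLip : ∀ R > 0, ∃ C > 0, ∀ x y : Euc d, ‖x‖ ≤ R → ‖y‖ ≤ R →
    frob (a x - a y) ≤ C * ‖x - y‖
  bMeas : Measurable b
  bLocBdd : ∀ R > 0, ∃ C, ∀ x : Euc d, ‖x‖ ≤ R → ‖b x‖ ≤ C
  nondeg : ∀ R > 0, ∃ C > 0, ∀ x : Euc d, ‖x‖ ≤ R → ∀ ξ : Euc d,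
    C⁻¹ * ‖ξ‖ ^ 2 ≤ quadForm (a x) ξ
  growth : ∃ C₀ > 0, ∀ x : Euc d,
    max (∑ i, b x i * x i) 0 + frob (a x) ≤ C₀ * (1 + ‖x‖ ^ 2)

/-- Standing assumptions (A1)–(A3) with `b` locally Hölder continuous. -/
structure StandingH {d : ℕ} (a : Euc d → Matrix (Fin d) (Fin d) ℝ) (b : Euc d → Euc d) : Prop where
  posdef : ∀ x, (a x).PosDef
  aLip : ∀ R > 0, ∃ C > 0, ∀ x y : Euc d, ‖x‖ ≤ R → ‖y‖ ≤ R →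
    frob (a x - a y) ≤ C * ‖x - y‖
  bHolder : LocallyHolder b
  nondeg : ∀ R > 0, ∃ C > 0, ∀ x : Euc d, ‖x‖ ≤ R → ∀ ξ : Euc d,
    C⁻¹ * ‖ξ‖ ^ 2 ≤ quadForm (a x) ξ
  growth : ∃ C₀ > 0, ∀ x : Euc d,
    max (∑ i, b x i * x i) 0 + frob (a x) ≤ C₀ * (1 + ‖x‖ ^ 2)

/-- The carré du champ `Γ(u,v) = Σ aᶦʲ ∂ᵢu ∂ⱼv`. -/
def Gam {d : ℕ} (a : Euc d → Matrix (Fin d) (Fin d) ℝ) (u v : Euc d → ℝ) (x : Euc d) : ℝ :=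
  ∑ i, ∑ j, a x i j * pd u i x * pd v j x

section Calculus

variable {d : ℕ} {a : Euc d → Matrix (Fin d) (Fin d) ℝ} {b : Euc d → Euc d}
  {u v : Euc d → ℝ} {x : Euc d}

lemma ContDiffAt.eventually_differentiableAt_two (hu : ContDiffAt ℝ 2 u x) :
    ∀ᶠ y in nhds x, DifferentiableAt ℝ u y := by
  filter_upwards [hu.eventually (by simp)] with y hy
  exact hy.differentiableAt (by norm_num)

lemma ContDiffAt.pd_contDiffAt (hu : ContDiffAt ℝ 2 u x) (j : Fin d) :
    ContDiffAt ℝ 1 (pd u j) x := by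
  have h : ContDiffAt ℝ 1 (fderiv ℝ u) x := hu.fderiv_right (by norm_num)
  exact h.clm_apply contDiffAt_const

lemma ContDiffAt.pd_differentiableAt (hu : ContDiffAt ℝ 2 u x) (j : Fin d) :
    DifferentiableAt ℝ (pd u j) x :=
  (hu.pd_contDiffAt j).differentiableAt (by norm_num)

lemma pd_mul (hu : DifferentiableAt ℝ u x) (hv : DifferentiableAt ℝ v x) (i : Fin d) :
    pd (fun y => u y * v y) i x = u x * pd v i x + v x * pd u i x := by
  simp [pd, fderiv_fun_mul hu hv]

lemma pd_add (hu : DifferentiableAt ℝ u x) (hv : DifferentiableAt ℝ v x) (i : Fin d) :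
    pd (fun y => u y + v y) i x = pd u i x + pd v i x := by
  simp [pd, fderiv_fun_add hu hv]

lemma pd_comp {g : ℝ → ℝ} {g' : ℝ} (hg : HasDerivAt g g' (u x)) (hu : DifferentiableAt ℝ u x)
    (i : Fin d) : pd (fun y => g (u y)) i x = g' * pd u i x := by
  have h := (hg.comp_hasFDerivAt x hu.hasFDerivAt).fderiv
  simp only [pd]
  change fderiv ℝ (g ∘ u) x _ = _
  rw [h]; simp

lemma pd2_congr {j i : Fin d} {f : Euc d → ℝ} (h : (fun y => pd u j y) =ᶠ[nhds x] f) :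
    pd2 u i j x = pd f i x := by
  simp only [pd2, pd]
  rw [← h.fderiv_eq]
  rfl

lemma pd2_mul (hu : ContDiffAt ℝ 2 u x) (hv : ContDiffAt ℝ 2 v x) (i j : Fin d) :
    pd2 (fun y => u y * v y) i j x =
      u x * pd2 v i j x + v x * pd2 u i j x + pd u i x * pd v j x + pd v i x * pd u j x := by
  have h : (fun y => pd (fun y => u y * v y) j y) =ᶠ[nhds x]
      fun y => u y * pd v j y + v y * pd u j y := by
    filter_upwards [hu.eventually_differentiableAt_two, hv.eventually_differentiableAt_two]
      with y h1 h2 using pd_mul h1 h2 j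
  have du := hu.differentiableAt (by norm_num)
  have dv := hv.differentiableAt (by norm_num)
  rw [pd2_congr h, pd_add (du.fun_mul (hv.pd_differentiableAt j))
    (dv.fun_mul (hu.pd_differentiableAt j)),
    pd_mul du (hv.pd_differentiableAt j), pd_mul dv (hu.pd_differentiableAt j)]
  change u x * pd2 v i j x + _ + (v x * pd2 u i j x + _) = _
  ring

lemma pd2_add (hu : ContDiffAt ℝ 2 u x) (hv : ContDiffAt ℝ 2 v x) (i j : Fin d) :
    pd2 (fun y => u y + v y) i j x = pd2 u i j x + pd2 v i j x := by
  have h : (fun y => pd (fun y => u y + v y) j y) =ᶠ[nhds x] fun y => pd u j y + pd v j y := by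
    filter_upwards [hu.eventually_differentiableAt_two, hv.eventually_differentiableAt_two]
      with y h1 h2 using pd_add h1 h2 j
  rw [pd2_congr h, pd_add (hu.pd_differentiableAt j) (hv.pd_differentiableAt j)]
  rfl

lemma pd2_comp {g g' : ℝ → ℝ} {g'' : ℝ} (hg : ∀ᶠ t in nhds (u x), HasDerivAt g (g' t) t)
    (hg' : HasDerivAt g' g'' (u x)) (hu : ContDiffAt ℝ 2 u x) (i j : Fin d) :
    pd2 (fun y => g (u y)) i j x = g' (u x) * pd2 u i j x + g'' * (pd u i x * pd u j x) := by
  have h : (fun y => pd (fun y => g (u y)) j y) =ᶠ[nhds x] fun y => g' (u y) * pd u j y := by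
    filter_upwards [hu.eventually_differentiableAt_two, hu.continuousAt.eventually hg]
      with y h1 h2 using pd_comp h2 h1 j
  have du := hu.differentiableAt (by norm_num)
  have dg : DifferentiableAt ℝ (fun y => g' (u y)) x :=
    hg'.differentiableAt.comp x du
  rw [pd2_congr h, pd_mul dg (hu.pd_differentiableAt j), pd_comp hg' du]
  change _ * pd2 u i j x + _ = _
  ring

lemma Lop_add (hu : ContDiffAt ℝ 2 u x) (hv : ContDiffAt ℝ 2 v x) :
    Lop a b (fun y => u y + v y) x = Lop a b u x + Lop a b v x := by
  simp only [Lop, pd2_add hu hv, pd_add (hu.differentiableAt (by norm_num))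
    (hv.differentiableAt (by norm_num)), mul_add, Finset.sum_add_distrib]
  ring

lemma Lop_mul (hu : ContDiffAt ℝ 2 u x) (hv : ContDiffAt ℝ 2 v x) :
    Lop a b (fun y => u y * v y) x =
      u x * Lop a b v x + v x * Lop a b u x + Gam a u v x + Gam a v u x := by
  simp only [Lop, Gam, pd2_mul hu hv, pd_mul (hu.differentiableAt (by norm_num))
    (hv.differentiableAt (by norm_num)), mul_add, Finset.sum_add_distrib, Finset.mul_sum]
  have e1 : ∀ (c : ℝ) (w : Euc d → ℝ), ∑ i, ∑ j, a x i j * (c * pd2 w i j x)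
      = ∑ i, ∑ j, c * (a x i j * pd2 w i j x) := by
    intro c w; congr! 2; ring
  have e2 : ∀ (c : ℝ) (w : Euc d → ℝ), ∑ i, b x i * (c * pd w i x)
      = ∑ i, c * (b x i * pd w i x) := by
    intro c w; congr! 1; ring
  rw [e1, e1, e2, e2]
  simp only [← mul_assoc]
  ring

lemma Lop_comp {g g' : ℝ → ℝ} {g'' : ℝ} (hg : ∀ᶠ t in nhds (u x), HasDerivAt g (g' t) t)
    (hg' : HasDerivAt g' g'' (u x)) (hu : ContDiffAt ℝ 2 u x) :
    Lop a b (fun y => g (u y)) x = g' (u x) * Lop a b u x + g'' * Gam a u u x := by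
  simp only [Lop, Gam, pd2_comp hg hg' hu, pd_comp hg.self_of_nhds
    (hu.differentiableAt (by norm_num)), mul_add, Finset.sum_add_distrib, Finset.mul_sum]
  have e1 : ∑ i, ∑ j, a x i j * (g' (u x) * pd2 u i j x)
      = ∑ i, ∑ j, g' (u x) * (a x i j * pd2 u i j x) := by
    congr! 2; ring
  have e2 : ∑ i, b x i * (g' (u x) * pd u i x)
      = ∑ i, g' (u x) * (b x i * pd u i x) := by
    congr! 1; ring
  have e3 : ∑ i, ∑ j, a x i j * (g'' * (pd u i x * pd u j x))
      = ∑ i, ∑ j, g'' * (a x i j * pd u i x * pd u j x) := by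
    congr! 2; ring
  rw [e1, e2, e3]
  ring

lemma Lop_const_mul (c : ℝ) (hu : ContDiffAt ℝ 2 u x) :
    Lop a b (fun y => c * u y) x = c * Lop a b u x := by
  have h := Lop_comp (a := a) (b := b) (u := u) (x := x) (g := fun t => c * t)
    (g' := fun _ => c) (g'' := 0)
    (Eventually.of_forall fun t => by simpa using (hasDerivAt_id t).const_mul c)
    (hasDerivAt_const _ _) hu
  simpa using h

lemma Lop_congr_coeff {a' : Euc d → Matrix (Fin d) (Fin d) ℝ} {b' : Euc d → Euc d}
    (ha : a x = a' x) (hb : b x = b' x) : Lop a b u x = Lop a' b' u x := by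
  simp only [Lop, ha, hb]

lemma Gam_comp_left {g : ℝ → ℝ} {g' : ℝ} (hg : HasDerivAt g g' (u x))
    (hu : DifferentiableAt ℝ u x) : Gam a (fun y => g (u y)) v x = g' * Gam a u v x := by
  simp only [Gam, pd_comp hg hu, Finset.mul_sum]
  congr! 2; ring

lemma Gam_comm (ha : (a x).PosDef) : Gam a u v x = Gam a v u x := by
  simp only [Gam]
  rw [Finset.sum_comm]
  have h : ∀ i j, a x i j = a x j i := fun i j => by simpa using ha.1.apply j i
  congr! 2 with i _ j _
  rw [h j i]; ring

lemma Gam_comp_right {g : ℝ → ℝ} {g' : ℝ} (hg : HasDerivAt g g' (u x))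
    (hu : DifferentiableAt ℝ u x) : Gam a v (fun y => g (u y)) x = g' * Gam a v u x := by
  simp only [Gam, pd_comp hg hu, Finset.mul_sum]
  congr! 2; ring

lemma quadForm_nonneg {m : Matrix (Fin d) (Fin d) ℝ} (hm : m.PosDef) (ξ : Euc d) :
    0 ≤ quadForm m ξ := by
  have h := hm.posSemidef.dotProduct_mulVec_nonneg ξ.ofLp
  refine h.trans_eq ?_
  simp only [quadForm, dotProduct, Matrix.mulVec, Finset.mul_sum]
  congr! 2
  simp; ring

lemma Gam_sub_smul_nonneg (ha : (a x).PosDef) (c : ℝ) :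
    0 ≤ Gam a u u x - 2 * c * Gam a u v x + c ^ 2 * Gam a v v x := by
  have h := quadForm_nonneg ha (WithLp.toLp 2 fun i => pd u i x - c * pd v i x)
  have hs := Gam_comm (u := u) (v := v) ha
  have e : quadForm (a x) (WithLp.toLp 2 fun i => pd u i x - c * pd v i x) =
      Gam a u u x - c * Gam a u v x - c * Gam a v u x + c ^ 2 * Gam a v v x := by
    simp only [quadForm, Gam, Finset.mul_sum, ← Finset.sum_sub_distrib, ← Finset.sum_add_distrib]
    congr! 2; ring
  rw [e, ← hs] at h
  linarith

lemma pd_eq_zero_of_isLocalMax (h : IsLocalMax u x) (i : Fin d) : pd u i x = 0 := by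
  simp [pd, h.fderiv_eq_zero]

lemma fderiv_apply_eq_sum (y ξ : Euc d) : fderiv ℝ u y ξ = ∑ j, ξ j * pd u j y := by
  conv_lhs => rw [← (EuclideanSpace.basisFun (Fin d) ℝ).sum_repr ξ]
  simp [pd, map_sum]

lemma hessian_nonpos_of_isLocalMax (h : IsLocalMax u x) (hu : ContDiffAt ℝ 2 u x) (ξ : Euc d) :
    ∑ i, ∑ j, ξ i * ξ j * pd2 u i j x ≤ 0 := by
  by_contra! hpos
  set l : ℝ → Euc d := fun t => x + t • ξ with hl
  have hlc : Continuous l := by fun_prop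
  have hl0 : l 0 = x := by simp [hl]
  have hlt : Tendsto l (nhds 0) (nhds x) := by simpa [hl0] using hlc.tendsto 0
  have hld : ∀ t, HasDerivAt l ξ t := fun t => by
    simpa only [id, one_smul] using ((hasDerivAt_id t).smul_const ξ).const_add x
  have d1 : ∀ᶠ t in nhds (0 : ℝ), HasDerivAt (fun t => u (l t)) (∑ j, ξ j * pd u j (l t)) t := by
    filter_upwards [hlt.eventually hu.eventually_differentiableAt_two] with t ht
    have := ht.hasFDerivAt.comp_hasDerivAt t (hld t)
    rwa [fderiv_apply_eq_sum] at this
  have d1' : deriv (fun t => u (l t)) =ᶠ[nhds 0] fun t => ∑ j, ξ j * pd u j (l t) := by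
    filter_upwards [d1] with t ht using ht.deriv
  have d2 : deriv (deriv (fun t => u (l t))) 0 = ∑ i, ∑ j, ξ i * ξ j * pd2 u i j x := by
    rw [d1'.deriv_eq]
    have : HasDerivAt (fun t => ∑ j, ξ j * pd u j (l t))
        (∑ j, ξ j * ∑ i, ξ i * pd2 u i j x) 0 := by
      refine HasDerivAt.fun_sum fun j _ => ?_
      refine HasDerivAt.const_mul _ ?_
      have hp := hu.pd_differentiableAt j
      rw [← hl0] at hp
      have := hp.hasFDerivAt.comp_hasDerivAt 0 (hld 0)
      rw [fderiv_apply_eq_sum, hl0] at this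
      exact this
    rw [this.deriv, Finset.sum_comm]
    simp only [Finset.mul_sum]
    congr! 2; ring
  have hmin := isLocalMin_of_deriv_deriv_pos (f := fun t => u (l t)) (x₀ := 0)
    (by rw [d2]; exact hpos)
    (by rw [d1'.self_of_nhds]; simp only [hl0]; simp [pd_eq_zero_of_isLocalMax h])
    (d1.self_of_nhds.continuousAt)
  have hmax : ∀ᶠ t in nhds (0 : ℝ), u (l t) ≤ u (l 0) := by
    rw [hl0]; exact hlt.eventually h
  have hconst : (fun t => u (l t)) =ᶠ[nhds 0] fun _ => u (l 0) := by
    filter_upwards [hmin, hmax] with t h1 h2 using le_antisymm h2 h1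
  have : deriv (deriv (fun t => u (l t))) 0 = 0 := by
    rw [hconst.deriv.deriv_eq]; simp
  rw [d2] at this
  linarith

/-- At an interior maximum a degenerate elliptic operator without zero-order term is nonpositive. -/
lemma Lop_nonpos_of_isLocalMax (ha : (a x).PosDef) (h : IsLocalMax u x)
    (hu : ContDiffAt ℝ 2 u x) : Lop a b u x ≤ 0 := by
  obtain ⟨m, B, hB⟩ := Matrix.posSemidef_iff_eq_sum_vecMulVec.mp ha.posSemidef
  have e : ∑ i, ∑ j, a x i j * pd2 u i j x =
      ∑ k, ∑ i, ∑ j, B k i * B k j * pd2 u i j x := by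
    rw [Finset.sum_comm]
    conv_rhs => rw [Finset.sum_comm]; enter [2, i]; rw [Finset.sum_comm]
    rw [Finset.sum_comm]
    congr! 2 with i _ j _
    rw [hB, Matrix.sum_apply, Finset.sum_mul]
    simp [Matrix.vecMulVec_apply]
  simp only [Lop, pd_eq_zero_of_isLocalMax h, e]
  simp only [mul_zero, Finset.sum_const_zero, add_zero]
  exact Finset.sum_nonpos fun k _ =>
    hessian_nonpos_of_isLocalMax h hu (WithLp.toLp 2 (B k))

end Calculus

section Regularity

variable {d : ℕ} {a : Euc d → Matrix (Fin d) (Fin d) ℝ} {b : Euc d → Euc d} {u v : Euc d → ℝ}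

lemma LocallyHolder.continuous {E F : Type*} [PseudoMetricSpace E] [PseudoMetricSpace F]
    {f : E → F} (hf : LocallyHolder f) : Continuous f := by
  rw [continuous_iff_continuousAt]
  intro x
  obtain ⟨C, r, hr, -, ε, hε, h⟩ := hf x (mem_univ x)
  rw [inter_univ] at h
  exact (h.continuousOn hr).continuousAt (ball_mem_nhds x hε)

lemma abs_le_frob (m : Matrix (Fin d) (Fin d) ℝ) (i j : Fin d) : |m i j| ≤ frob m := by
  refine Real.abs_le_sqrt ?_
  calc (m i j) ^ 2 ≤ ∑ j, (m i j) ^ 2 :=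
        Finset.single_le_sum (f := fun j => (m i j) ^ 2) (fun _ _ => sq_nonneg _)
          (Finset.mem_univ j)
    _ ≤ _ := Finset.single_le_sum (f := fun i => ∑ j, (m i j) ^ 2)
          (fun _ _ => Finset.sum_nonneg fun _ _ => sq_nonneg _) (Finset.mem_univ i)

lemma StandingH.continuous_coeff (h : StandingH a b) (i j : Fin d) :
    Continuous fun x => a x i j := by
  rw [continuous_iff_continuousAt]
  intro x
  obtain ⟨C, hC, hL⟩ := h.aLip (‖x‖ + 1) (by positivity)
  refine continuousAt_of_locally_lipschitz zero_lt_one C fun y hy => ?_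
  rw [dist_eq_norm] at hy
  have hy' : ‖y‖ ≤ ‖x‖ + 1 := by
    have := norm_le_norm_add_norm_sub' y x
    linarith
  rw [Real.dist_eq, dist_eq_norm]
  exact (abs_le_frob (a y - a x) i j).trans (hL y x hy' (by linarith))

lemma StandingH.continuous_drift (h : StandingH a b) (i : Fin d) : Continuous fun x => b x i := by
  have := h.bHolder.continuous
  fun_prop

lemma ContDiff.continuous_pd (hu : ContDiff ℝ 2 u) (i : Fin d) : Continuous (pd u i) :=
  (hu.continuous_fderiv (by norm_num)).clm_apply continuous_const

lemma ContDiff.continuous_pd2 (hu : ContDiff ℝ 2 u) (i j : Fin d) : Continuous (pd2 u i j) := by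
  have h : ContDiff ℝ 1 (pd u j) :=
    contDiff_iff_contDiffAt.mpr fun x => hu.contDiffAt.pd_contDiffAt j
  exact (h.continuous_fderiv (by norm_num)).clm_apply continuous_const

lemma StandingH.continuous_Lop (h : StandingH a b) (hu : ContDiff ℝ 2 u) :
    Continuous (Lop a b u) :=
  (continuous_finsetSum _ fun i _ => continuous_finsetSum _ fun j _ =>
    (h.continuous_coeff i j).mul (hu.continuous_pd2 i j)).add
    (continuous_finsetSum _ fun i _ => (h.continuous_drift i).mul (hu.continuous_pd i))

lemma StandingH.continuous_Gam (h : StandingH a b) (hu : ContDiff ℝ 2 u) (hv : ContDiff ℝ 2 v) :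
    Continuous (Gam a u v) :=
  continuous_finsetSum _ fun i _ => continuous_finsetSum _ fun j _ =>
    ((h.continuous_coeff i j).mul (hu.continuous_pd i)).mul (hv.continuous_pd j)

/-- A continuous function is bounded by a positive constant on a closed ball. -/
lemma Continuous.exists_pos_abs_le {f : Euc d → ℝ} (hf : Continuous f) (x₀ : Euc d) (R : ℝ) :
    ∃ C > 0, ∀ x ∈ closedBall x₀ R, |f x| ≤ C := by
  obtain ⟨C, hC⟩ := (isCompact_closedBall x₀ R).exists_bound_of_continuousOn hf.continuousOn
  exact ⟨max C 1, by positivity, fun x hx => (hC x hx).trans (le_max_left _ _)⟩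

/-- A positive continuous function is bounded below by a positive constant on a closed ball. -/
lemma Continuous.exists_pos_le {f : Euc d → ℝ} (hf : Continuous f) (hpos : ∀ x, 0 < f x)
    (x₀ : Euc d) (R : ℝ) : ∃ c > 0, ∀ x ∈ closedBall x₀ R, c ≤ f x := by
  obtain ⟨C, hC, h⟩ := (hf.inv₀ fun x => (hpos x).ne').exists_pos_abs_le x₀ R
  refine ⟨C⁻¹, by positivity, fun x hx => ?_⟩
  have : |(f x)⁻¹| ≤ C := h x hx
  rw [abs_of_pos (inv_pos.mpr (hpos x))] at this
  exact inv_le_of_inv_le₀ (hpos x) this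

end Regularity

section PositivePart

lemma hasDerivAt_max_zero_pow (n : ℕ) (hn : 1 ≤ n) (t : ℝ) :
    HasDerivAt (fun t : ℝ => max t 0 ^ (n + 1)) (((n : ℝ) + 1) * max t 0 ^ n) t := by
  rcases lt_trichotomy t 0 with ht | rfl | ht
  · have e : (fun t : ℝ => max t 0 ^ (n + 1)) =ᶠ[nhds t] fun _ => 0 := by
      filter_upwards [Iio_mem_nhds ht] with s hs
      rw [max_eq_right (le_of_lt hs)]; simp
    rw [max_eq_right ht.le, zero_pow (by omega), mul_zero]
    exact (hasDerivAt_const t (0 : ℝ)).congr_of_eventuallyEq e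
  · rw [max_self, zero_pow (by omega), mul_zero, hasDerivAt_iff_isLittleO_nhds_zero]
    simp only [zero_add, max_self, smul_zero, sub_zero, ne_eq, Nat.add_eq_zero_iff, one_ne_zero,
      and_false, not_false_eq_true, zero_pow]
    have h1 : (fun h : ℝ => max h 0 ^ (n + 1)) =O[nhds 0] fun h : ℝ => h ^ (n + 1) := by
      refine Asymptotics.IsBigO.of_bound 1 (Eventually.of_forall fun h => ?_)
      rw [one_mul, norm_pow, norm_pow]
      refine pow_le_pow_left₀ (norm_nonneg _) ?_ _
      rw [Real.norm_eq_abs, Real.norm_eq_abs, abs_of_nonneg (le_max_right _ _)]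
      exact max_le (le_abs_self h) (abs_nonneg h)
    refine h1.trans_isLittleO ?_
    simpa using Asymptotics.isLittleO_pow_id (𝕜 := ℝ) (n := n + 1) (by omega)
  · have e : (fun t : ℝ => max t 0 ^ (n + 1)) =ᶠ[nhds t] fun t => t ^ (n + 1) := by
      filter_upwards [Ioi_mem_nhds ht] with s hs
      rw [max_eq_left (le_of_lt hs)]
    rw [max_eq_left ht.le]
    have := (hasDerivAt_pow (n + 1) t).congr_of_eventuallyEq e
    simpa using this

lemma contDiff_max_zero_pow (n : ℕ) : ContDiff ℝ 2 (fun t : ℝ => max t 0 ^ (n + 3)) := by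
  have hd : ∀ m : ℕ, 1 ≤ m → deriv (fun t : ℝ => max t 0 ^ (m + 1)) =
      fun t => ((m : ℝ) + 1) * max t 0 ^ m := fun m hm =>
    funext fun t => (hasDerivAt_max_zero_pow m hm t).deriv
  have h1 : ContDiff ℝ 1 (fun t : ℝ => max t 0 ^ (n + 2)) := by
    rw [contDiff_one_iff_deriv]
    refine ⟨fun t => (hasDerivAt_max_zero_pow (n + 1) (by omega) t).differentiableAt, ?_⟩
    rw [hd (n + 1) (by omega)]
    fun_prop
  rw [show (2 : WithTop ℕ∞) = 1 + 1 by norm_num, contDiff_succ_iff_deriv]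
  refine ⟨fun t => (hasDerivAt_max_zero_pow (n + 2) (by omega) t).differentiableAt, by simp, ?_⟩
  rw [hd (n + 2) (by omega)]
  exact contDiff_const.mul h1

end PositivePart

section Convexity

variable {d : ℕ} {a : Euc d → Matrix (Fin d) (Fin d) ℝ} {b : Euc d → Euc d}
  {u s w φ : Euc d → ℝ} {x : Euc d}

/-- Geometric means of positive supersolutions are supersolutions. -/
lemma Lop_geom_mean_le (ha : (a x).PosDef) (hw : ContDiffAt ℝ 2 w x) (hφ : ContDiffAt ℝ 2 φ x)
    (hw0 : 0 < w x) (hφ0 : 0 < φ x) {α β W A B : ℝ} (hα : 0 ≤ α) (hβ : 0 ≤ β) (hαβ : α + β = 1)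
    (hA : Lop a b w x + W * w x ≤ A * w x) (hB : Lop a b φ x + W * φ x ≤ B * φ x) :
    Lop a b (fun y => w y ^ α * φ y ^ β) x + W * (w x ^ α * φ x ^ β)
      ≤ (α * A + β * B) * (w x ^ α * φ x ^ β) := by
  have hd : ∀ (p t : ℝ), 0 < t → HasDerivAt (fun t : ℝ => t ^ p) (p * t ^ (p - 1)) t :=
    fun p t ht => Real.hasDerivAt_rpow_const (Or.inl ht.ne')
  have hd' : ∀ (p t : ℝ), 0 < t →
      HasDerivAt (fun t : ℝ => p * t ^ (p - 1)) (p * ((p - 1) * t ^ (p - 1 - 1))) t :=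
    fun p t ht => (hd (p - 1) t ht).const_mul p
  have hev : ∀ (p t : ℝ), 0 < t →
      ∀ᶠ r in nhds t, HasDerivAt (fun t : ℝ => t ^ p) (p * r ^ (p - 1)) r := by
    intro p t ht
    filter_upwards [Ioi_mem_nhds ht] with r hr using hd p r hr
  rw [Lop_mul (hw.rpow_const_of_ne hw0.ne') (hφ.rpow_const_of_ne hφ0.ne'),
    Lop_comp (hev α _ hw0) (hd' α _ hw0) hw, Lop_comp (hev β _ hφ0) (hd' β _ hφ0) hφ,
    Gam_comp_left (hd α _ hw0) (hw.differentiableAt (by norm_num)),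
    Gam_comp_right (hd β _ hφ0) (hφ.differentiableAt (by norm_num)),
    Gam_comp_left (hd β _ hφ0) (hφ.differentiableAt (by norm_num)),
    Gam_comp_right (hd α _ hw0) (hw.differentiableAt (by norm_num)), Gam_comm (u := φ) (v := w) ha]
  have hG := Gam_sub_smul_nonneg (a := a) (u := w) (v := φ) (x := x) ha (w x / φ x)
  simp only [Real.rpow_sub_one hw0.ne', Real.rpow_sub_one hφ0.ne']
  have hS : 0 < w x ^ α * φ x ^ β := by positivity
  set p := w x ^ α
  set q := φ x ^ β
  set X := w x
  set Y := φ x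
  obtain rfl : β = 1 - α := by linarith
  have e : p * ((1 - α) * (q / Y) * Lop a b φ x
        + (1 - α) * ((1 - α - 1) * (q / Y / Y)) * Gam a φ φ x)
      + q * (α * (p / X) * Lop a b w x + α * ((α - 1) * (p / X / X)) * Gam a w w x)
      + α * (p / X) * ((1 - α) * (q / Y) * Gam a w φ x)
      + (1 - α) * (q / Y) * (α * (p / X) * Gam a w φ x)
      = (p * q) * ((1 - α) * (Lop a b φ x / Y) + α * (Lop a b w x / X)
        - α * (1 - α) * ((Gam a w w x - 2 * (X / Y) * Gam a w φ x + (X / Y) ^ 2 * Gam a φ φ x)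
          / X ^ 2)) := by
    field_simp; ring
  rw [e]
  have h1 : Lop a b w x / X ≤ A - W := by rw [div_le_iff₀ hw0]; linarith
  have h2 : Lop a b φ x / Y ≤ B - W := by rw [div_le_iff₀ hφ0]; linarith
  have h3 := div_nonneg hG (sq_nonneg X)
  have h4 := mul_nonneg (mul_nonneg hα hβ) h3
  have h5 := mul_le_mul_of_nonneg_left h1 hα
  have h6 := mul_le_mul_of_nonneg_left h2 hβ
  have h7 : (1 - α) * (Lop a b φ x / Y) + α * (Lop a b w x / X)
        - α * (1 - α) * ((Gam a w w x - 2 * (X / Y) * Gam a w φ x + (X / Y) ^ 2 * Gam a φ φ x)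
          / X ^ 2) ≤ (α * A + (1 - α) * B) - W := by nlinarith
  have h8 := mul_le_mul_of_nonneg_left h7 hS.le
  linarith

/-- The convex homogeneous combination `u₊³ / s²` of a subsolution `u` and a supersolution `s`
is a subsolution. -/
lemma Lop_cube_div_sq_nonneg (ha : (a x).PosDef) (hu : ContDiffAt ℝ 2 u x)
    (hs : ContDiffAt ℝ 2 s x) (hs0 : 0 < s x) {W : ℝ}
    (hsub : 0 ≤ Lop a b u x + W * u x) (hsup : Lop a b s x + W * s x ≤ 0) :
    0 ≤ Lop a b (fun y => max (u y) 0 ^ 3 * (s y ^ 2)⁻¹) x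
      + W * (max (u x) 0 ^ 3 * (s x ^ 2)⁻¹) := by
  have c1 : ∀ t : ℝ, HasDerivAt (fun t : ℝ => max t 0 ^ 3) (3 * max t 0 ^ 2) t := fun t => by
    have := hasDerivAt_max_zero_pow 2 (by norm_num) t
    exact this.congr_deriv (by norm_num)
  have c2 : ∀ t : ℝ, HasDerivAt (fun t : ℝ => 3 * max t 0 ^ 2) (3 * (2 * max t 0)) t := fun t => by
    have := (hasDerivAt_max_zero_pow 1 (by norm_num) t).const_mul 3
    exact this.congr_deriv (by norm_num)
  have i1 : ∀ t : ℝ, 0 < t → HasDerivAt (fun t : ℝ => (t ^ 2)⁻¹) (-2 * (t ^ 3)⁻¹) t := by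
    intro t ht
    refine ((hasDerivAt_pow 2 t).fun_inv (by positivity)).congr_deriv ?_
    field_simp; norm_num; ring
  have i2 : ∀ t : ℝ, 0 < t → HasDerivAt (fun t : ℝ => -2 * (t ^ 3)⁻¹) (6 * (t ^ 4)⁻¹) t := by
    intro t ht
    refine (((hasDerivAt_pow 3 t).fun_inv (by positivity)).const_mul (-2)).congr_deriv ?_
    field_simp; norm_num; ring
  have iev : ∀ᶠ r in nhds (s x), HasDerivAt (fun t : ℝ => (t ^ 2)⁻¹) (-2 * (r ^ 3)⁻¹) r := by
    filter_upwards [Ioi_mem_nhds hs0] with r hr using i1 r hr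
  have hU : ContDiffAt ℝ 2 (fun y => max (u y) 0 ^ 3) x :=
    (contDiff_max_zero_pow 0).contDiffAt.comp x hu
  have hS : ContDiffAt ℝ 2 (fun y => (s y ^ 2)⁻¹) x := (hs.pow 2).inv (by positivity)
  rw [Lop_mul hU hS, Lop_comp (Eventually.of_forall c1) (c2 _) hu, Lop_comp iev (i2 _ hs0) hs,
    Gam_comp_left (c1 _) (hu.differentiableAt (by norm_num)),
    Gam_comp_right (i1 _ hs0) (hs.differentiableAt (by norm_num)),
    Gam_comp_left (i1 _ hs0) (hs.differentiableAt (by norm_num)),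
    Gam_comp_right (c1 _) (hu.differentiableAt (by norm_num)), Gam_comm (u := s) (v := u) ha]
  set P := max (u x) 0
  have hP : 0 ≤ P := le_max_right _ _
  have hPu : P * u x = P * P := by
    rcases le_total (u x) 0 with h | h
    · simp [P, max_eq_right h]
    · simp [P, max_eq_left h]
  have hG := Gam_sub_smul_nonneg (a := a) (u := u) (v := s) (x := x) ha (P / s x)
  set X := s x
  have hPu' : P ^ 2 * u x = P ^ 3 := by rw [pow_two, mul_assoc, hPu]; ring
  have e : P ^ 3 * (-2 * (X ^ 3)⁻¹ * Lop a b s x + 6 * (X ^ 4)⁻¹ * Gam a s s x)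
      + (X ^ 2)⁻¹ * (3 * P ^ 2 * Lop a b u x + 3 * (2 * P) * Gam a u u x)
      + 3 * P ^ 2 * (-2 * (X ^ 3)⁻¹ * Gam a u s x) + -2 * (X ^ 3)⁻¹ * (3 * P ^ 2 * Gam a u s x)
      + W * (P ^ 3 * (X ^ 2)⁻¹)
      = (X ^ 2)⁻¹ * (3 * P ^ 2 * (Lop a b u x + W * u x))
        + 2 * P ^ 3 * (X ^ 3)⁻¹ * (-(Lop a b s x + W * X))
        + 6 * P * (X ^ 2)⁻¹ * (Gam a u u x - 2 * (P / X) * Gam a u s x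
          + (P / X) ^ 2 * Gam a s s x) := by
    rw [show 3 * P ^ 2 * (Lop a b u x + W * u x)
      = 3 * P ^ 2 * Lop a b u x + 3 * W * (P ^ 2 * u x) by ring, hPu']
    field_simp; ring
  rw [e]
  have : 0 ≤ -(Lop a b s x + W * X) := by linarith
  positivity

end Convexity

section Paraboloid

variable {d : ℕ} {a : Euc d → Matrix (Fin d) (Fin d) ℝ} {b : Euc d → Euc d}

/-- The concave paraboloid `ρ² - |y - x₀|²`. -/
def parab {d : ℕ} (x₀ : Euc d) (ρ : ℝ) (y : Euc d) : ℝ := ρ ^ 2 - ‖y - x₀‖ ^ 2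

lemma contDiff_parab (x₀ : Euc d) (ρ : ℝ) : ContDiff ℝ 2 (parab x₀ ρ) :=
  contDiff_const.sub ((contDiff_id.sub contDiff_const).norm_sq ℝ)

lemma pd_parab (x₀ : Euc d) (ρ : ℝ) (i : Fin d) (y : Euc d) :
    pd (parab x₀ ρ) i y = -2 * (y - x₀) i := by
  have h : HasFDerivAt (parab x₀ ρ) (-((2 : ℕ) • (innerSL ℝ (y - x₀)))) y := by
    have := ((hasStrictFDerivAt_norm_sq (y - x₀)).hasFDerivAt.comp y
      ((hasFDerivAt_id y).sub_const x₀)).const_sub (ρ ^ 2)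
    exact this
  rw [pd, h.fderiv]
  simp [EuclideanSpace.inner_single_right]

lemma Gam_parab (x₀ : Euc d) (ρ : ℝ) (y : Euc d) :
    Gam a (parab x₀ ρ) (parab x₀ ρ) y = 4 * quadForm (a y) (y - x₀) := by
  simp only [Gam, pd_parab, quadForm, Finset.mul_sum]
  congr! 2; ring

/-- The compactly supported barrier `(ρ² - |y - x₀|²)₊ⁿ⁺³`. -/
def barrier {d : ℕ} (x₀ : Euc d) (ρ : ℝ) (n : ℕ) (y : Euc d) : ℝ := max (parab x₀ ρ y) 0 ^ (n + 3)

lemma contDiff_barrier (x₀ : Euc d) (ρ : ℝ) (n : ℕ) : ContDiff ℝ 2 (barrier x₀ ρ n) :=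
  (contDiff_max_zero_pow n).comp (contDiff_parab x₀ ρ)

lemma barrier_nonneg (x₀ : Euc d) (ρ : ℝ) (n : ℕ) (y : Euc d) : 0 ≤ barrier x₀ ρ n y :=
  pow_nonneg (le_max_right _ _) _

lemma Lop_barrier (x₀ : Euc d) (ρ : ℝ) (n : ℕ) (y : Euc d) :
    Lop a b (barrier x₀ ρ n) y = ((n : ℝ) + 3) * max (parab x₀ ρ y) 0 ^ (n + 1) *
      (max (parab x₀ ρ y) 0 * Lop a b (parab x₀ ρ) y
        + ((n : ℝ) + 2) * Gam a (parab x₀ ρ) (parab x₀ ρ) y) := by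
  have h1 : ∀ t : ℝ, HasDerivAt (fun t : ℝ => max t 0 ^ (n + 3))
      (((n : ℝ) + 3) * max t 0 ^ (n + 2)) t := fun t => by
    have := hasDerivAt_max_zero_pow (n + 2) (by omega) t
    exact this.congr_deriv (by push_cast; ring)
  have h2 : ∀ t : ℝ, HasDerivAt (fun t : ℝ => ((n : ℝ) + 3) * max t 0 ^ (n + 2))
      (((n : ℝ) + 3) * (((n : ℝ) + 2) * max t 0 ^ (n + 1))) t := fun t => by
    have := (hasDerivAt_max_zero_pow (n + 1) (by omega) t).const_mul ((n : ℝ) + 3)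
    exact this.congr_deriv (by push_cast; ring)
  have := Lop_comp (a := a) (b := b) (Eventually.of_forall h1) (h2 (parab x₀ ρ y))
    (contDiff_parab x₀ ρ).contDiffAt
  unfold barrier
  rw [this]; ring

lemma Gam_barrier_right (u : Euc d → ℝ) (x₀ : Euc d) (ρ : ℝ) (n : ℕ) (y : Euc d) :
    Gam a u (barrier x₀ ρ n) y =
      ((n : ℝ) + 3) * max (parab x₀ ρ y) 0 ^ (n + 2) * Gam a u (parab x₀ ρ) y := by
  have h1 : ∀ t : ℝ, HasDerivAt (fun t : ℝ => max t 0 ^ (n + 3))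
      (((n : ℝ) + 3) * max t 0 ^ (n + 2)) t := fun t => by
    have := hasDerivAt_max_zero_pow (n + 2) (by omega) t
    exact this.congr_deriv (by push_cast; ring)
  exact Gam_comp_right (h1 _) ((contDiff_parab x₀ ρ).contDiffAt.differentiableAt (by norm_num))

end Paraboloid

section Comparison

variable {d : ℕ} {a : Euc d → Matrix (Fin d) (Fin d) ℝ} {b : Euc d → Euc d} {W Ψ : Euc d → ℝ}

/-- `Ψ` lies below every strict positive exterior supersolution which dominates it on a sphere. -/
def ExteriorComparison {d : ℕ} (a : Euc d → Matrix (Fin d) (Fin d) ℝ) (b : Euc d → Euc d)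
    (W Ψ : Euc d → ℝ) : Prop :=
  ∀ (R₁ R γ : ℝ) (s : Euc d → ℝ), R₁ < R → 0 < γ → ContDiffOn ℝ 2 s {x | R₁ < ‖x‖} →
    (∀ x, R₁ < ‖x‖ → 0 < s x) → (∀ x, R₁ < ‖x‖ → Lop a b s x + W x * s x ≤ -γ * s x) →
    (∀ x, ‖x‖ = R → Ψ x ≤ s x) → ∀ x, R ≤ ‖x‖ → Ψ x ≤ s x

lemma exists_radius_of_eventually_cocompact {p : Euc d → Prop}
    (h : ∀ᶠ x in cocompact (Euc d), p x) : ∃ R, ∀ x, R < ‖x‖ → p x := by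
  obtain ⟨t, ht, hts⟩ := mem_cocompact.mp h
  obtain ⟨R, hR⟩ := ht.isBounded.exists_norm_le
  exact ⟨R, fun x hx => hts fun hxt => absurd (hR x hxt) (not_le.mpr hx)⟩

lemma exists_radius_of_isCompact {K : Set (Euc d)} (hK : IsCompact K) :
    ∃ R, ∀ x, R < ‖x‖ → x ∉ K := by
  obtain ⟨R, hR⟩ := hK.isBounded.exists_norm_le
  exact ⟨R, fun x hx hxK => absurd (hR x hxK) (not_le.mpr hx)⟩

lemma isOpen_lt_norm (R : ℝ) : IsOpen {x : Euc d | R < ‖x‖} :=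
  isOpen_lt continuous_const continuous_norm

/-- Minimal growth of the ground state of an operator controls the exterior supersolutions of any
operator with the same principal part and drift near infinity and asymptotically equal potential. -/
lemma IsGroundState.exists_le_of_perturbation {a₁ : Euc d → Matrix (Fin d) (Fin d) ℝ}
    {b₁ : Euc d → Euc d} {W₁ Ψ₁ : Euc d → ℝ} (hgs : IsGroundState a₁ b₁ W₁ Ψ₁ univ)
    (hcoef : ∀ᶠ x in cocompact (Euc d), a₁ x = a x ∧ b₁ x = b x)
    (hW : Tendsto (fun x => W₁ x - W x) (cocompact (Euc d)) (nhds 0)) {R γ : ℝ} (hγ : 0 < γ)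
    {v s : Euc d → ℝ} (hv : ContDiffOn ℝ 2 v {x | R < ‖x‖}) (hpos : ∀ x, R < ‖x‖ → 0 < v x)
    (hvs : ∀ x, R < ‖x‖ → v x ≤ s x)
    (hsup : ∀ x, R < ‖x‖ → Lop a b v x + W x * v x ≤ -γ * s x) :
    ∃ κ > 0, ∃ R', ∀ x, R' < ‖x‖ → κ * Ψ₁ x ≤ v x := by
  have hW' : ∀ᶠ x in cocompact (Euc d), W₁ x - W x ≤ γ := by
    filter_upwards [hW.eventually (gt_mem_nhds hγ)] with x hx using le_of_lt hx
  obtain ⟨R₁, hR₁⟩ := exists_radius_of_eventually_cocompact (hcoef.and hW')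
  have hsub : univ \ closedBall (0 : Euc d) (max R R₁) ⊆ {x | R < ‖x‖} := by
    intro x hx
    simp only [Set.mem_sdiff, mem_univ, true_and, mem_closedBall, dist_zero_right, not_le] at hx
    exact (le_max_left _ _).trans_lt hx
  have hsub₁ : univ \ closedBall (0 : Euc d) (max R R₁) ⊆ {x | R₁ < ‖x‖} := by
    intro x hx
    simp only [Set.mem_sdiff, mem_univ, true_and, mem_closedBall, dist_zero_right, not_le] at hx
    exact (le_max_right _ _).trans_lt hx
  obtain ⟨K', hK', -, -, κ, hκ, h⟩ := hgs.2.2.2 (closedBall 0 (max R R₁))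
    (isCompact_closedBall _ _) (subset_univ _) v (hv.mono hsub) (fun x hx => hpos x (hsub hx))
    (fun x hx => by
      obtain ⟨⟨e1, e2⟩, e3⟩ := hR₁ x (hsub₁ hx)
      have h1 := hsup x (hsub hx)
      have h2 := hvs x (hsub hx)
      have h3 := hpos x (hsub hx)
      rw [Lop_congr_coeff e1 e2]
      nlinarith)
  obtain ⟨R', hR'⟩ := exists_radius_of_isCompact hK'
  exact ⟨κ, hκ, R', fun x hx => h x ⟨mem_univ x, hR' x hx⟩⟩

theorem exteriorComparison_of_isGroundState {a₁ : Euc d → Matrix (Fin d) (Fin d) ℝ}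
    {b₁ : Euc d → Euc d} {W₁ Ψ₁ : Euc d → ℝ} (hgs : IsGroundState a₁ b₁ W₁ Ψ₁ univ)
    (hcoef : ∀ᶠ x in cocompact (Euc d), a₁ x = a x ∧ b₁ x = b x)
    (hW : Tendsto (fun x => W₁ x - W x) (cocompact (Euc d)) (nhds 0))
    (ha : ∀ x, (a x).PosDef) (hΨ : ContDiff ℝ 2 Ψ) (hsub : ∀ x, 0 ≤ Lop a b Ψ x + W x * Ψ x)
    {C : ℝ} (hC : 0 < C) (hbound : ∀ x, max (Ψ x) 0 ≤ C * Ψ₁ x) :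
    ExteriorComparison a b W Ψ := by
  intro R₁ R γ s hR hγ hs hs0 hsup hsphere
  by_contra! hcon
  obtain ⟨y, hyR, hy⟩ := hcon
  have hΩ : ∀ x : Euc d, R ≤ ‖x‖ → R₁ < ‖x‖ := fun x hx => hR.trans_le hx
  have hsAt : ∀ x, R₁ < ‖x‖ → ContDiffAt ℝ 2 s x := fun x hx =>
    hs.contDiffAt ((isOpen_lt_norm R₁).mem_nhds hx)
  have hΨ₁ : ∀ x, 0 < Ψ₁ x := fun x => hgs.1 x (mem_univ x)
  set f : Euc d → ℝ := fun x => Ψ x / s x with hf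
  have hfc : ContinuousOn f {x | R ≤ ‖x‖} := by
    refine hΨ.continuous.continuousOn.div (hs.continuousOn.mono fun x hx => hΩ x hx) ?_
    intro x hx
    exact (hs0 x (hΩ x hx)).ne'
  have hcpt : ∀ r, IsCompact ({x : Euc d | R ≤ ‖x‖} ∩ closedBall 0 r) := fun r =>
    (isCompact_closedBall _ _).inter_left (isClosed_le continuous_const continuous_norm)
  obtain ⟨κ, hκ, R₂, hR₂⟩ := hgs.exists_le_of_perturbation hcoef hW hγ hs hs0
    (fun x _ => le_rfl) hsup
  have hbdd : BddAbove (f '' {x | R ≤ ‖x‖}) := by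
    obtain ⟨B, hB⟩ := (hcpt R₂).bddAbove_image (hfc.mono inter_subset_left)
    refine ⟨max B (C / κ), ?_⟩
    rintro _ ⟨x, hx, rfl⟩
    rcases le_or_gt ‖x‖ R₂ with h | h
    · exact (hB ⟨x, ⟨hx, by simpa using h⟩, rfl⟩).trans (le_max_left _ _)
    · refine le_trans ?_ (le_max_right _ _)
      have h1 := hR₂ x h
      have h2 := (le_max_left _ _).trans (hbound x)
      rw [hf]
      simp only
      rw [div_le_div_iff₀ (hs0 x (hΩ x hx)) hκ]
      nlinarith
  set F := sSup (f '' {x | R ≤ ‖x‖}) with hF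
  have hfF : ∀ x, R ≤ ‖x‖ → f x ≤ F := fun x hx => le_csSup hbdd ⟨x, hx, rfl⟩
  have hF1 : 1 < F := by
    refine lt_of_lt_of_le ?_ (hfF y hyR)
    exact (one_lt_div (hs0 y (hΩ y hyR))).mpr hy
  have hΨF : ∀ x, R ≤ ‖x‖ → Ψ x ≤ F * s x := fun x hx =>
    (div_le_iff₀ (hs0 x (hΩ x hx))).mp (hfF x hx)
  have hlt : ∀ x, R ≤ ‖x‖ → Ψ x < F * s x := by
    intro x hx
    refine lt_of_le_of_ne (hΨF x hx) fun heq => ?_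
    have hsx := hs0 x (hΩ x hx)
    have hxR : R < ‖x‖ := lt_of_le_of_ne hx fun h => by
      have := hsphere x h.symm
      nlinarith
    have hloc : IsLocalMax (fun y => Ψ y + -F * s y) x := by
      filter_upwards [(isOpen_lt_norm R).mem_nhds hxR] with y hy
      have := hΨF y (le_of_lt hy)
      linarith
    have hs2 := hsAt x (hΩ x hx)
    have h1 := Lop_nonpos_of_isLocalMax (b := b) (ha x) hloc
      (hΨ.contDiffAt.add (contDiffAt_const.mul hs2))
    rw [Lop_add hΨ.contDiffAt (contDiffAt_const.mul hs2), Lop_const_mul _ hs2] at h1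
    have h2 := hsub x
    have h3 := hsup x (hΩ x hx)
    rw [heq] at h2
    have h4 := mul_le_mul_of_nonneg_left h3 (by linarith : 0 ≤ F)
    have h5 : 0 < F * (γ * s x) := by positivity
    nlinarith
  set v : Euc d → ℝ := fun x => F ^ 3 * s x + -1 * (max (Ψ x) 0 ^ 3 * (s x ^ 2)⁻¹) with hv
  have hF0 : 0 < F := by linarith
  have hcube : ∀ x, R₁ < ‖x‖ → 0 ≤ max (Ψ x) 0 ^ 3 * (s x ^ 2)⁻¹ := fun x hx =>
    mul_nonneg (pow_nonneg (le_max_right _ _) _) (by positivity)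
  have hvpos : ∀ x, R < ‖x‖ → 0 < v x := by
    intro x hx
    have hsx := hs0 x (hΩ x hx.le)
    have h1 : max (Ψ x) 0 < F * s x := max_lt (hlt x hx.le) (by positivity)
    have h2 : max (Ψ x) 0 ^ 3 < (F * s x) ^ 3 :=
      pow_lt_pow_left₀ h1 (le_max_right _ _) (by norm_num)
    have h3 : max (Ψ x) 0 ^ 3 * (s x ^ 2)⁻¹ < (F * s x) ^ 3 * (s x ^ 2)⁻¹ :=
      mul_lt_mul_of_pos_right h2 (by positivity)
    have h4 : (F * s x) ^ 3 * (s x ^ 2)⁻¹ = F ^ 3 * s x := by field_simp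
    simp only [hv]; linarith
  have hcubeC2 : ∀ x, R₁ < ‖x‖ → ContDiffAt ℝ 2 (fun x => max (Ψ x) 0 ^ 3 * (s x ^ 2)⁻¹) x := by
    intro x hx
    have hsx := hs0 x hx
    exact ((contDiff_max_zero_pow 0).comp hΨ).contDiffAt.mul
      (((hsAt x hx).pow 2).inv (by positivity))
  have hvC2 : ContDiffOn ℝ 2 v {x | R < ‖x‖} := fun x hx =>
    ((contDiffAt_const.mul (hsAt x (hΩ x (le_of_lt hx)))).add
      (contDiffAt_const.mul (hcubeC2 x (hΩ x (le_of_lt hx))))).contDiffWithinAt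
  obtain ⟨κ', hκ', R₃, hR₃⟩ := hgs.exists_le_of_perturbation (a := a) (b := b) (W := W)
    (s := fun x => F ^ 3 * s x) hcoef hW hγ hvC2 hvpos
    (fun x hx => by have := hcube x (hΩ x hx.le); simp only [hv]; linarith)
    (fun x hx => by
      have hx' := hΩ x hx.le
      have hsx := hs0 x hx'
      have h1 := Lop_cube_div_sq_nonneg (b := b) (ha x) hΨ.contDiffAt (hsAt x hx') hsx (hsub x)
        ((hsup x hx').trans (by nlinarith))
      have h2 := mul_le_mul_of_nonneg_left (hsup x hx') (by positivity : 0 ≤ F ^ 3)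
      simp only [hv]
      rw [Lop_add (contDiffAt_const.mul (hsAt x hx')) (contDiffAt_const.mul (hcubeC2 x hx')),
        Lop_const_mul _ (hsAt x hx'), Lop_const_mul _ (hcubeC2 x hx')]
      nlinarith)
  set κ'' := κ' * (F / (2 * C)) with hκ''
  have hκ''0 : 0 < κ'' := by positivity
  set e := min (F / 2) (κ'' / (3 * F ^ 2)) with he
  have he0 : 0 < e := lt_min (by positivity) (by positivity)
  have hfar : ∀ x, R ≤ ‖x‖ → max R R₃ < ‖x‖ → f x ≤ F - e := by
    intro x hx hx3
    have hsx := hs0 x (hΩ x hx)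
    by_contra! hgt
    have hhalf : F / 2 < f x := by have := min_le_left (F / 2) (κ'' / (3 * F ^ 2)); linarith
    have hfx : Ψ x = f x * s x := by rw [hf]; field_simp
    have hΨx : 0 < Ψ x := by rw [hfx]; exact mul_pos (by linarith) hsx
    have h1 := (le_max_left _ _).trans (hbound x)
    have h2 : F / 2 * s x ≤ C * Ψ₁ x := by nlinarith
    have h3 : F / (2 * C) * s x ≤ Ψ₁ x := by
      have : F / (2 * C) * s x = (F / 2 * s x) / C := by field_simp
      rw [this, div_le_iff₀ hC]; linarith
    have h4 : κ'' * s x ≤ v x := by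
      refine le_trans ?_ (hR₃ x ((le_max_right _ _).trans_lt hx3))
      rw [hκ'', mul_assoc]
      exact mul_le_mul_of_nonneg_left h3 hκ'.le
    have h5 : v x = (F ^ 3 - f x ^ 3) * s x := by
      simp only [hv, max_eq_left hΨx.le]
      rw [hfx]; field_simp; ring
    rw [h5] at h4
    have h6 : κ'' ≤ F ^ 3 - f x ^ 3 := le_of_mul_le_mul_right h4 hsx
    have h7 : e * (3 * F ^ 2) ≤ κ'' := by
      rw [← le_div_iff₀ (by positivity)]; exact min_le_right _ _
    have h8 : (F - e) ^ 3 < f x ^ 3 :=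
      pow_lt_pow_left₀ hgt (by have := min_le_left (F / 2) (κ'' / (3 * F ^ 2)); linarith)
        (by norm_num)
    have h9 : e ≤ F / 2 := min_le_left _ _
    nlinarith [mul_pos (mul_pos he0 he0) hF0]
  have hG : ∃ G < F, ∀ x, R ≤ ‖x‖ → f x ≤ G := by
    rcases ({x : Euc d | R ≤ ‖x‖} ∩ closedBall 0 (max R R₃)).eq_empty_or_nonempty with hem | hne
    · refine ⟨F - e, by linarith, fun x hx => hfar x hx ?_⟩
      by_contra! h
      have : x ∈ ({x : Euc d | R ≤ ‖x‖} ∩ closedBall 0 (max R R₃)) := ⟨hx, by simpa using h⟩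
      rw [hem] at this
      exact this
    · obtain ⟨m, hm, hmax⟩ := (hcpt (max R R₃)).exists_isMaxOn hne (hfc.mono inter_subset_left)
      refine ⟨max (F - e) (f m), max_lt (by linarith)
        ((div_lt_iff₀ (hs0 m (hΩ m hm.1))).mpr (hlt m hm.1)), fun x hx => ?_⟩
      rcases le_or_gt ‖x‖ (max R R₃) with h | h
      · exact (hmax ⟨hx, by simpa using h⟩).trans (le_max_right _ _)
      · exact (hfar x hx h).trans (le_max_left _ _)
  obtain ⟨G, hGF, hG⟩ := hG
  have : F ≤ G := csSup_le ⟨_, y, hyR, rfl⟩ (by rintro _ ⟨x, hx, rfl⟩; exact hG x hx)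
  linarith

/-- Comparison with an almost supersolution `w`, up to a small multiple of a strict one `φ`. -/
lemma ExteriorComparison.le_add (hcmp : ExteriorComparison a b W Ψ) (ha : ∀ x, (a x).PosDef)
    {φ w : Euc d → ℝ} {R₁ R δ η B α : ℝ} (hR : R₁ < R)
    (hφ : ContDiff ℝ 2 φ) (hφ0 : ∀ x, 0 < φ x)
    (hφs : ∀ x, R₁ < ‖x‖ → Lop a b φ x + W x * φ x ≤ -δ * φ x)
    (hw : ContDiffOn ℝ 2 w {x | R₁ < ‖x‖}) (hw0 : ∀ x, R₁ < ‖x‖ → 0 < w x)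
    (hws : ∀ x, R₁ < ‖x‖ → Lop a b w x + W x * w x ≤ η * w x)
    (hB : 0 < B) (hα0 : 0 < α) (hα1 : α < 1) (hη : α * η < (1 - α) * δ)
    (hΨw : ∀ x, ‖x‖ = R → Ψ x ≤ w x) (hΨφ : ∀ x, ‖x‖ = R → Ψ x ≤ B * φ x) :
    ∀ x, R ≤ ‖x‖ → Ψ x ≤ w x + (1 - α) * B * φ x := by
  have hwAt : ∀ x, R₁ < ‖x‖ → ContDiffAt ℝ 2 w x := fun x hx =>
    hw.contDiffAt ((isOpen_lt_norm R₁).mem_nhds hx)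
  have hBφ0 : ∀ x, 0 < B * φ x := fun x => mul_pos hB (hφ0 x)
  have hBφ : ContDiff ℝ 2 fun x => B * φ x := contDiff_const.mul hφ
  have key := hcmp R₁ R ((1 - α) * δ - α * η) (fun x => w x ^ α * (B * φ x) ^ (1 - α)) hR
    (by linarith)
    (fun x hx => (((hwAt x hx).rpow_const_of_ne (hw0 x hx).ne').mul
      (hBφ.contDiffAt.rpow_const_of_ne (hBφ0 x).ne')).contDiffWithinAt)
    (fun x hx => mul_pos (Real.rpow_pos_of_pos (hw0 x hx) _) (Real.rpow_pos_of_pos (hBφ0 x) _))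
    (fun x hx => by
      have h := Lop_geom_mean_le (b := b) (φ := fun x => B * φ x) (W := W x) (A := η) (B := -δ)
        (ha x) (hwAt x hx) hBφ.contDiffAt (hw0 x hx) (hBφ0 x) hα0.le (by linarith : 0 ≤ 1 - α)
        (by ring) (hws x hx) (by
          rw [Lop_const_mul _ hφ.contDiffAt]
          nlinarith [hφs x hx])
      refine h.trans_eq ?_
      ring)
    (fun x hx => by
      have hx' : R₁ < ‖x‖ := hx ▸ hR
      have hp : 0 < w x ^ α * (B * φ x) ^ (1 - α) :=
        mul_pos (Real.rpow_pos_of_pos (hw0 x hx') _) (Real.rpow_pos_of_pos (hBφ0 x) _)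
      rcases le_or_gt (Ψ x) 0 with h | h
      · exact h.trans hp.le
      · calc Ψ x = Ψ x ^ α * Ψ x ^ (1 - α) := by
              rw [← Real.rpow_add h]; simp
          _ ≤ _ := mul_le_mul (Real.rpow_le_rpow h.le (hΨw x hx) hα0.le)
              (Real.rpow_le_rpow h.le (hΨφ x hx) (by linarith)) (by positivity)
              (Real.rpow_nonneg (hw0 x hx').le _))
  intro x hx
  have hx' : R₁ < ‖x‖ := hR.trans_le hx
  have h1 := Real.geom_mean_le_arith_mean2_weighted hα0.le (by linarith : 0 ≤ 1 - α)
    (hw0 x hx').le (hBφ0 x).le (by ring)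
  have h2 := key x hx
  have h3 : α * w x ≤ w x := by nlinarith [hw0 x hx']
  linarith

end Comparison

section Propagation

variable {d : ℕ} {a : Euc d → Matrix (Fin d) (Fin d) ℝ} {b : Euc d → Euc d}

lemma parab_eq_sq_sub_sq (x₀ : Euc d) (ρ : ℝ) (x : Euc d) :
    parab x₀ ρ x = ρ ^ 2 - dist x x₀ ^ 2 := by
  rw [parab, dist_eq_norm]

lemma StandingH.exists_le_Gam_parab (hst : StandingH a b) (x₀ : Euc d) (ρ ρ' : ℝ) {r : ℝ}
    (hr : 0 < r) :
    ∃ θ > 0, ∀ x ∈ closedBall x₀ ρ', r ≤ dist x x₀ →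
      θ ≤ Gam a (parab x₀ ρ) (parab x₀ ρ) x := by
  obtain ⟨C, hC, h⟩ := hst.nondeg (‖x₀‖ + |ρ'| + 1) (by positivity)
  refine ⟨4 * (C⁻¹ * r ^ 2), by positivity, fun x hx hxr => ?_⟩
  rw [Gam_parab]
  rw [mem_closedBall] at hx
  rw [dist_eq_norm] at hx hxr
  have h1 : ‖x‖ ≤ ‖x₀‖ + |ρ'| + 1 := by
    have := norm_le_norm_add_norm_sub' x x₀
    have := le_abs_self ρ'
    linarith
  have h2 := h x h1 (x - x₀)
  have h3 : C⁻¹ * r ^ 2 ≤ C⁻¹ * ‖x - x₀‖ ^ 2 := by gcongr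
  linarith

/-- An interior lower bound for strict supersolutions. -/
lemma StandingH.exists_le_of_Lop_le_neg (hst : StandingH a b) (x₀ : Euc d) {r σ M : ℝ}
    (hr : 0 < r) (hσ : 0 < σ) (hM : 0 ≤ M) :
    ∃ c > 0, ∀ z : Euc d → ℝ, ContDiff ℝ 2 z → (∀ x, 0 ≤ z x) →
      (∀ x ∈ closedBall x₀ r, Lop a b z x - M * z x ≤ -σ) →
      ∀ x ∈ closedBall x₀ (r / 2), c ≤ z x := by
  set p := parab x₀ r with hp
  have hpC := contDiff_parab x₀ r
  obtain ⟨C, hC, hCb⟩ :=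
    ((hst.continuous_Lop hpC).sub (continuous_const.mul hpC.continuous :
      Continuous fun x => M * p x)).exists_pos_abs_le x₀ r
  set ε := σ / (2 * C) with hε
  have hε0 : 0 < ε := by positivity
  refine ⟨ε * (3 / 4 * r ^ 2), by positivity, fun z hz hz0 hsup => ?_⟩
  have key : ∀ x ∈ closedBall x₀ r, ε * p x + -1 * z x ≤ 0 := by
    obtain ⟨m, hm, hmax⟩ := (isCompact_closedBall x₀ r).exists_isMaxOn
      ⟨x₀, mem_closedBall_self hr.le⟩
      ((continuous_const.mul hpC.continuous).add
        (continuous_const.mul hz.continuous) : Continuous fun x => ε * p x + -1 * z x).continuousOn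
    suffices h : ε * p m + -1 * z m ≤ 0 from fun x hx => (hmax hx).trans h
    by_contra! hpos
    have hmr : dist m x₀ < r := by
      refine lt_of_le_of_ne (mem_closedBall.mp hm) fun h => ?_
      have : p m = 0 := by rw [hp, parab_eq_sq_sub_sq, h]; ring
      rw [this] at hpos
      linarith [hz0 m]
    have hloc : IsLocalMax (fun x => ε * p x + -1 * z x) m :=
      hmax.isLocalMax (mem_of_superset (isOpen_ball.mem_nhds (mem_ball.mpr hmr)) ball_subset_closedBall)
    have h1 := Lop_nonpos_of_isLocalMax (b := b) (hst.posdef m) hloc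
      ((contDiffAt_const.mul hpC.contDiffAt).add (contDiffAt_const.mul hz.contDiffAt))
    rw [Lop_add (contDiffAt_const.mul hpC.contDiffAt) (contDiffAt_const.mul hz.contDiffAt),
      Lop_const_mul _ hpC.contDiffAt, Lop_const_mul _ hz.contDiffAt] at h1
    have h2 := hsup m hm
    have h3 := (abs_le.mp (hCb m hm)).1
    have h4 : ε * C = σ / 2 := by rw [hε]; field_simp
    have h5 := mul_le_mul_of_nonneg_left h3 hε0.le
    have h6 := mul_nonneg hM hpos.le
    simp only [Pi.sub_apply, Pi.mul_apply] at h5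
    nlinarith
  intro x hx
  have hx' := mem_closedBall.mp hx
  have h1 := key x (closedBall_subset_closedBall (by linarith) hx)
  have h2 : 3 / 4 * r ^ 2 ≤ p x := by
    rw [hp, parab_eq_sq_sub_sq]
    nlinarith [dist_nonneg (x := x) (y := x₀)]
  have h3 := mul_le_mul_of_nonneg_left h2 hε0.le
  linarith

/-- Positivity on a ball propagates, quantitatively, to larger balls. -/
lemma StandingH.exists_le_of_le_closedBall (hst : StandingH a b) (x₀ : Euc d) {r ρ c₀ M : ℝ}
    (hr : 0 < r) (hρ : 0 ≤ ρ) (hc₀ : 0 < c₀) (hM : 0 ≤ M) :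
    ∃ c > 0, ∃ η > 0, ∀ z : Euc d → ℝ, ContDiff ℝ 2 z → (∀ x, 0 ≤ z x) →
      (∀ x ∈ closedBall x₀ (ρ + 1), Lop a b z x - M * z x ≤ η) →
      (∀ x ∈ closedBall x₀ r, c₀ ≤ z x) → ∀ x ∈ closedBall x₀ ρ, c ≤ z x := by
  set p := parab x₀ (ρ + 2) with hp
  have hpC := contDiff_parab x₀ (ρ + 2)
  obtain ⟨θ, hθ, hθb⟩ := hst.exists_le_Gam_parab x₀ (ρ + 2) (ρ + 1) hr
  obtain ⟨C, hC, hCb⟩ := (hpC.continuous.mul (hst.continuous_Lop hpC)).exists_pos_abs_le x₀ (ρ + 1)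
  obtain ⟨n, hn⟩ := exists_nat_ge ((C + M * (ρ + 2) ^ 4 + 1) / θ)
  rw [div_le_iff₀ hθ] at hn
  set β := barrier x₀ (ρ + 2) n with hβ
  have hβC := contDiff_barrier x₀ (ρ + 2) n
  set T : ℝ := ((ρ + 2) ^ 2) ^ (n + 3) with hT
  have hT0 : 0 < T := by positivity
  have hpT : ∀ x, p x ≤ (ρ + 2) ^ 2 := fun x => by
    rw [hp, parab_eq_sq_sub_sq]; linarith [sq_nonneg (dist x x₀)]
  have hβT : ∀ x, β x ≤ T := fun x =>
    pow_le_pow_left₀ (le_max_right _ _) (max_le (hpT x) (by positivity)) _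
  have hp1 : ∀ x ∈ closedBall x₀ (ρ + 1), 2 * ρ + 3 ≤ p x := fun x hx => by
    rw [hp, parab_eq_sq_sub_sq]
    nlinarith [dist_nonneg (x := x) (y := x₀), mem_closedBall.mp hx]
  have hβe : ∀ x ∈ closedBall x₀ (ρ + 1), β x = p x ^ (n + 3) := fun x hx => by
    rw [hβ, barrier, max_eq_left (by linarith [hp1 x hx])]
  have hLβ : ∀ x ∈ closedBall x₀ (ρ + 1), r ≤ dist x x₀ → 1 ≤ Lop a b β x - M * β x := by
    intro x hx hxr
    have h1 := hp1 x hx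
    rw [hβe x hx, hβ, Lop_barrier, max_eq_left (by linarith)]
    have h2 := hθb x hx hxr
    have h3 := (abs_le.mp (hCb x hx)).1
    have hn0 : (0 : ℝ) ≤ n := Nat.cast_nonneg n
    simp only [Pi.mul_apply] at h3
    have h4 : M * p x ^ 2 ≤ M * (ρ + 2) ^ 4 := by
      have : p x ^ 2 ≤ ((ρ + 2) ^ 2) ^ 2 := pow_le_pow_left₀ (by linarith) (hpT x) 2
      rw [← pow_mul] at this
      exact mul_le_mul_of_nonneg_left this hM
    set G := Gam a (parab x₀ (ρ + 2)) (parab x₀ (ρ + 2)) x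
    have h5 : n * θ ≤ (n + 2) * G := by nlinarith
    have hM4 : 0 ≤ M * (ρ + 2) ^ 4 := by positivity
    have h6 : 1 + M * (ρ + 2) ^ 4 ≤ p x * Lop a b p x + (n + 2) * G := by
      linarith
    have h7 : 1 ≤ (n + 3) * (p x * Lop a b p x + (n + 2) * G) - M * p x ^ 2 := by nlinarith
    have h8 : 1 ≤ p x ^ (n + 1) := one_le_pow₀ (by linarith)
    calc (1 : ℝ) ≤ p x ^ (n + 1) * ((n + 3) * (p x * Lop a b p x + (n + 2) * G) - M * p x ^ 2) :=
          one_le_mul_of_one_le_of_one_le h8 h7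
      _ = _ := by ring
  set β₀ : ℝ := (2 * ρ + 3) ^ (n + 3) with hβ₀
  have hβ₀0 : 0 < β₀ := by positivity
  set ε := c₀ / T with hε
  have hε0 : 0 < ε := by positivity
  refine ⟨ε * ((4 * ρ + 4) ^ (n + 3) - β₀), mul_pos hε0 (sub_pos.mpr
    (pow_lt_pow_left₀ (by linarith) (by linarith) (by omega))), ε / 2, by positivity,
    fun z hz hz0 hsup hzr => ?_⟩
  have key : ∀ x ∈ closedBall x₀ (ρ + 1), ε * β x + -1 * z x ≤ ε * β₀ := by
    obtain ⟨m, hm, hmax⟩ := (isCompact_closedBall x₀ (ρ + 1)).exists_isMaxOn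
      ⟨x₀, mem_closedBall_self (by linarith)⟩
      ((continuous_const.mul hβC.continuous).add
        (continuous_const.mul hz.continuous) : Continuous fun x => ε * β x + -1 * z x).continuousOn
    suffices h : ε * β m + -1 * z m ≤ ε * β₀ from fun x hx => (hmax hx).trans h
    by_contra! hpos
    have hmρ : dist m x₀ < ρ + 1 := by
      refine lt_of_le_of_ne (mem_closedBall.mp hm) fun h => ?_
      have : p m = 2 * ρ + 3 := by rw [hp, parab_eq_sq_sub_sq, h]; ring
      rw [hβe m hm, this] at hpos
      linarith [hz0 m]
    have hmr : r < dist m x₀ := by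
      by_contra! h
      have h1 := hzr m (mem_closedBall.mpr h)
      have h2 := mul_le_mul_of_nonneg_left (hβT m) hε0.le
      have h3 : ε * T = c₀ := by rw [hε]; field_simp
      nlinarith
    have hloc : IsLocalMax (fun x => ε * β x + -1 * z x) m :=
      hmax.isLocalMax (mem_of_superset (isOpen_ball.mem_nhds (mem_ball.mpr hmρ)) ball_subset_closedBall)
    have h1 := Lop_nonpos_of_isLocalMax (b := b) (hst.posdef m) hloc
      ((contDiffAt_const.mul hβC.contDiffAt).add (contDiffAt_const.mul hz.contDiffAt))
    rw [Lop_add (contDiffAt_const.mul hβC.contDiffAt) (contDiffAt_const.mul hz.contDiffAt),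
      Lop_const_mul _ hβC.contDiffAt, Lop_const_mul _ hz.contDiffAt] at h1
    have h2 := hsup m hm
    have h3 := mul_le_mul_of_nonneg_left (hLβ m hm hmr.le) hε0.le
    have h4 : 0 ≤ M * (ε * β m + -1 * z m) :=
      mul_nonneg hM ((mul_pos hε0 hβ₀0).trans hpos).le
    nlinarith
  intro x hx
  have hx' := mem_closedBall.mp hx
  have hx1 : x ∈ closedBall x₀ (ρ + 1) := closedBall_subset_closedBall (by linarith) hx
  have h1 := key x hx1
  have h2 : 4 * ρ + 4 ≤ p x := by
    rw [hp, parab_eq_sq_sub_sq]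
    nlinarith [dist_nonneg (x := x) (y := x₀)]
  have h3 : (4 * ρ + 4) ^ (n + 3) ≤ β x := by
    rw [hβe x hx1]; exact pow_le_pow_left₀ (by linarith) h2 _
  have h4 := mul_le_mul_of_nonneg_left h3 hε0.le
  linarith

end Propagation

section Rigidity

variable {d : ℕ} {a : Euc d → Matrix (Fin d) (Fin d) ℝ} {b : Euc d → Euc d} {W Ψ φ : Euc d → ℝ}

/-- Almost supersolutions can be normalised to touch `Ψ` in a fixed ball, while staying above it
up to a small multiple of `φ`. -/
lemma ExteriorComparison.exists_touching (hcmp : ExteriorComparison a b W Ψ)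
    (ha : ∀ x, (a x).PosDef) (hΨ : ContDiff ℝ 2 Ψ) (hΨpos : ∃ x, 0 < Ψ x)
    (hφ : ContDiff ℝ 2 φ) (hφ0 : ∀ x, 0 < φ x) {R₀ δ : ℝ} (hδ : 0 < δ)
    (hφs : ∀ x, R₀ < ‖x‖ → Lop a b φ x + W x * φ x ≤ -δ * φ x) :
    ∃ R, ∀ h : Euc d → ℝ, (∀ x, 0 ≤ h x) →
      (∀ η > 0, ∃ w : Euc d → ℝ, ContDiff ℝ 2 w ∧ (∀ x, 0 < w x) ∧
        ∀ x, Lop a b w x + (W x + h x) * w x ≤ η * w x) →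
      ∀ ε > 0, ∃ w : Euc d → ℝ, ContDiff ℝ 2 w ∧ (∀ x, 0 < w x) ∧
        (∀ x, Lop a b w x + (W x + h x) * w x ≤ ε * w x) ∧
        (∀ x, Ψ x ≤ w x + ε * φ x) ∧ ∃ x ∈ closedBall (0 : Euc d) R, w x = Ψ x := by
  obtain ⟨y, hy⟩ := hΨpos
  set R := max (R₀ + 1) ‖y‖ with hR
  have hR0 : R₀ < R := (by linarith : R₀ < R₀ + 1).trans_le (le_max_left _ _)
  have hyR : y ∈ closedBall (0 : Euc d) R := by simp [hR]
  obtain ⟨B, hB, hBb⟩ := (hΨ.continuous.div hφ.continuous fun x => (hφ0 x).ne').exists_pos_abs_le 0 R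
  have hΨφ : ∀ x, ‖x‖ = R → Ψ x ≤ B * φ x := fun x hx =>
    (div_le_iff₀ (hφ0 x)).mp ((le_abs_self _).trans (hBb x (by simp [hx])))
  refine ⟨R, fun h hh hfam ε hε => ?_⟩
  set κ := min (1 / 2) (ε / B) with hκ
  have hκ0 : 0 < κ := lt_min (by norm_num) (by positivity)
  have hκ1 : κ ≤ 1 / 2 := min_le_left _ _
  have hκB : κ * B ≤ ε := by rw [← le_div_iff₀ hB]; exact min_le_right _ _
  obtain ⟨w, hw, hw0, hws⟩ := hfam (min ε (κ * δ / 2)) (lt_min hε (by positivity))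
  obtain ⟨m, hm, hmax⟩ := (isCompact_closedBall (0 : Euc d) R).exists_isMaxOn ⟨y, hyR⟩
    (hΨ.continuous.div hw.continuous fun x => (hw0 x).ne').continuousOn
  set A := Ψ m / w m with hA
  have hA0 : 0 < A := (div_pos hy (hw0 y)).trans_le (hmax hyR)
  have hΨw : ∀ x ∈ closedBall (0 : Euc d) R, Ψ x ≤ A * w x := fun x hx =>
    (div_le_iff₀ (hw0 x)).mp (hmax hx)
  have hAw0 : ∀ x, 0 < A * w x := fun x => mul_pos hA0 (hw0 x)
  have hAws : ∀ x, Lop a b (fun x => A * w x) x + (W x + h x) * (A * w x)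
      ≤ min ε (κ * δ / 2) * (A * w x) := fun x => by
    rw [Lop_const_mul _ hw.contDiffAt]
    have := mul_le_mul_of_nonneg_left (hws x) hA0.le
    linarith
  refine ⟨fun x => A * w x, contDiff_const.mul hw, hAw0, fun x => (hAws x).trans
    (mul_le_mul_of_nonneg_right (min_le_left _ _) (hAw0 x).le), fun x => ?_, m, hm, ?_⟩
  · rcases le_or_gt ‖x‖ R with hx | hx
    · have h1 := hΨw x (by simpa using hx)
      have h2 := mul_pos hε (hφ0 x)
      linarith
    · have h1 := hcmp.le_add (w := fun x => A * w x) (η := κ * δ / 2) (α := 1 - κ) ha hR0 hφ hφ0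
        hφs (contDiff_const.mul hw).contDiffOn (fun x _ => hAw0 x)
        (fun x _ => by
          have h1 := hAws x
          have h2 := mul_le_mul_of_nonneg_right (min_le_right ε (κ * δ / 2)) (hAw0 x).le
          have h3 := mul_nonneg (hh x) (hAw0 x).le
          linarith)
        hB (by linarith) (by linarith) (by nlinarith [mul_pos hκ0 hδ])
        (fun x hx => hΨw x (by simp [hx])) hΨφ x hx.le
      have h2 := mul_le_mul_of_nonneg_right hκB (hφ0 x).le
      simp only [sub_sub_cancel] at h1
      linarith
  · rw [hA]; field_simp [(hw0 m).ne']

/-- If almost supersolutions touch the subsolution `Ψ` in a fixed ball, then `Ψ` is a nonnegative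
supersolution. -/
lemma StandingH.nonneg_and_supersolution_of_touching (hst : StandingH a b) (hW : Continuous W)
    (hΨ : ContDiff ℝ 2 Ψ) (hφ : ContDiff ℝ 2 φ) (hφ0 : ∀ x, 0 < φ x)
    {h : Euc d → ℝ} (hh : Continuous h)
    (hQ : ∀ x, 0 ≤ Lop a b Ψ x + (W x + h x) * Ψ x) {R : ℝ}
    (hfam : ∀ ε > 0, ∃ w : Euc d → ℝ, ContDiff ℝ 2 w ∧ (∀ x, 0 < w x) ∧
        (∀ x, Lop a b w x + (W x + h x) * w x ≤ ε * w x) ∧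
        (∀ x, Ψ x ≤ w x + ε * φ x) ∧ ∃ x ∈ closedBall (0 : Euc d) R, w x = Ψ x) (x₀ : Euc d) :
    0 ≤ Ψ x₀ ∧ Lop a b Ψ x₀ + (W x₀ + h x₀) * Ψ x₀ ≤ 0 := by
  set Q : Euc d → ℝ := fun x => Lop a b Ψ x + (W x + h x) * Ψ x with hQdef
  have hQc : Continuous Q := (hst.continuous_Lop hΨ).add ((hW.add hh).mul hΨ.continuous)
  set ρ := |R| + ‖x₀‖ + 1 with hρ
  have hρ0 : 0 ≤ ρ := by positivity
  obtain ⟨M, hM, hMb⟩ := (hW.add hh).exists_pos_abs_le x₀ (ρ + 1)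
  obtain ⟨D, hD, hDb⟩ := ((hΨ.continuous.add ((hW.add hh).mul hφ.continuous)).add
    (hst.continuous_Lop hφ)).exists_pos_abs_le x₀ (ρ + 1)
  have hLz : ∀ ε, 0 < ε → ε ≤ 1 → ∀ w : Euc d → ℝ, ContDiff ℝ 2 w →
      (∀ x, Lop a b w x + (W x + h x) * w x ≤ ε * w x) → (∀ x, Ψ x ≤ w x + ε * φ x) →
      ∀ x ∈ closedBall x₀ (ρ + 1), Lop a b (fun x => (w x + ε * φ x) + -1 * Ψ x) x
        - (M + 1) * ((w x + ε * φ x) + -1 * Ψ x) ≤ ε * D - Q x := by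
    intro ε hε hε1 w hw hws hΨw x hx
    rw [Lop_add (hw.contDiffAt.add (contDiffAt_const.mul hφ.contDiffAt))
      (contDiffAt_const.mul hΨ.contDiffAt), Lop_add hw.contDiffAt
      (contDiffAt_const.mul hφ.contDiffAt), Lop_const_mul _ hφ.contDiffAt,
      Lop_const_mul _ hΨ.contDiffAt]
    have h1 := hws x
    have h2 := hΨw x
    have h3 := (abs_le.mp (hMb x hx)).1
    have h4 := mul_le_mul_of_nonneg_left (abs_le.mp (hDb x hx)).2 hε.le
    simp only [Pi.add_apply, Pi.mul_apply] at h3 h4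
    have h5 : 0 < ε * ε * φ x := mul_pos (mul_pos hε hε) (hφ0 x)
    have h6 : (ε - (W x + h x)) * ((w x + ε * φ x) + -1 * Ψ x)
        ≤ (M + 1) * ((w x + ε * φ x) + -1 * Ψ x) :=
      mul_le_mul_of_nonneg_right (by linarith) (by linarith)
    simp only [hQdef]
    nlinarith
  obtain ⟨Φ, hΦ, hΦb⟩ := hφ.continuous.exists_pos_abs_le 0 R
  -- a uniform positive lower bound near `x₀` would propagate to the touching points
  have hcontra : ∀ r > 0, ∀ c₀ > 0, ∀ ε₀ > 0, ¬ ∀ ε, 0 < ε → ε ≤ 1 → ε ≤ ε₀ →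
      ∀ w : Euc d → ℝ, ContDiff ℝ 2 w → (∀ x, 0 < w x) →
      (∀ x, Lop a b w x + (W x + h x) * w x ≤ ε * w x) → (∀ x, Ψ x ≤ w x + ε * φ x) →
      ∀ x ∈ closedBall x₀ r, c₀ ≤ (w x + ε * φ x) + -1 * Ψ x := by
    intro r hr c₀ hc₀ ε₀ hε₀ hlow
    obtain ⟨c, hc, η, hη, hprop⟩ := hst.exists_le_of_le_closedBall x₀ hr hρ0 hc₀
      (by positivity : 0 ≤ M + 1)
    set ε := min (min 1 ε₀) (min (η / D) (c / (2 * Φ))) with hε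
    have hε0 : 0 < ε := lt_min (lt_min one_pos hε₀) (lt_min (by positivity) (by positivity))
    have e1 : ε ≤ 1 := (min_le_left _ _).trans (min_le_left _ _)
    have e2 : ε ≤ ε₀ := (min_le_left _ _).trans (min_le_right _ _)
    have e3 : ε * D ≤ η := by
      rw [← le_div_iff₀ hD]; exact (min_le_right _ _).trans (min_le_left _ _)
    have e4 : ε * (2 * Φ) ≤ c := by
      rw [← le_div_iff₀ (by positivity)]; exact (min_le_right _ _).trans (min_le_right _ _)
    obtain ⟨w, hw, hw0, hws, hΨw, m, hm, hwm⟩ := hfam ε hε0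
    have hmρ : m ∈ closedBall x₀ ρ := by
      rw [mem_closedBall, dist_eq_norm]
      have h1 : ‖m‖ ≤ R := by simpa using hm
      have := norm_sub_le m x₀
      have := le_abs_self R
      linarith
    have h1 := hprop _ ((hw.add (contDiff_const.mul hφ)).add (contDiff_const.mul hΨ))
      (fun x => by linarith [hΨw x])
      (fun x hx => (hLz ε hε0 e1 w hw hws hΨw x hx).trans (by linarith [hQ x]))
      (hlow ε hε0 e1 e2 w hw hw0 hws hΨw) m hmρ
    have h2 := mul_le_mul_of_nonneg_left ((le_abs_self _).trans (hΦb m hm)) hε0.le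
    rw [hwm] at h1
    linarith
  constructor
  · by_contra! hneg
    obtain ⟨r, hr, hball⟩ := Metric.nhds_basis_closedBall.mem_iff.mp
      (hΨ.continuous.continuousAt.eventually (gt_mem_nhds (by linarith : Ψ x₀ < Ψ x₀ / 2)))
    refine hcontra r hr (-Ψ x₀ / 2) (by linarith) 1 one_pos ?_
    intro ε hε _ _ w _ hw0 _ _ x hx
    have h1 : Ψ x < Ψ x₀ / 2 := hball hx
    have h2 := mul_pos hε (hφ0 x)
    have h3 := hw0 x
    linarith
  · by_contra! hpos
    change 0 < Q x₀ at hpos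
    obtain ⟨r, hr, hball⟩ := Metric.nhds_basis_closedBall.mem_iff.mp
      (hQc.continuousAt.eventually (lt_mem_nhds (by linarith : Q x₀ / 2 < Q x₀)))
    set r' := min r (ρ + 1) with hr'
    have hr'0 : 0 < r' := lt_min hr (by linarith)
    obtain ⟨c, hc, hloc⟩ := hst.exists_le_of_Lop_le_neg x₀ hr'0 (by linarith : 0 < Q x₀ / 4)
      (by positivity : 0 ≤ M + 1)
    refine hcontra (r' / 2) (by linarith) c hc (Q x₀ / 4 / D) (by positivity) ?_
    intro ε hε hε1 hε2 w hw hw0 hws hΨw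
    rw [le_div_iff₀ hD] at hε2
    refine hloc _ ((hw.add (contDiff_const.mul hφ)).add (contDiff_const.mul hΨ))
      (fun x => by linarith [hΨw x]) fun x hx => ?_
    have h1 : Q x₀ / 2 < Q x :=
      hball (closedBall_subset_closedBall (min_le_left _ _) hx)
    have h2 := hLz ε hε hε1 w hw hws hΨw x
      (closedBall_subset_closedBall (min_le_right _ _) hx)
    linarith

/-- Strong maximum principle: a nonnegative solution which is positive somewhere is positive. -/
lemma StandingH.pos_of_nonneg_of_solution (hst : StandingH a b) (hW : Continuous W)
    (hΨ : ContDiff ℝ 2 Ψ) (hΨpos : ∃ x, 0 < Ψ x) (hΨ0 : ∀ x, 0 ≤ Ψ x)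
    (hsup : ∀ x, Lop a b Ψ x + W x * Ψ x ≤ 0) (x : Euc d) : 0 < Ψ x := by
  obtain ⟨y, hy⟩ := hΨpos
  obtain ⟨r, hr, hball⟩ := Metric.nhds_basis_closedBall.mem_iff.mp
    (hΨ.continuous.continuousAt.eventually (lt_mem_nhds (by linarith : Ψ y / 2 < Ψ y)))
  obtain ⟨M, hM, hMb⟩ := hW.exists_pos_abs_le y (dist x y + 1)
  obtain ⟨c, hc, η, hη, h⟩ := hst.exists_le_of_le_closedBall y hr (dist_nonneg (x := x) (y := y))
    (by linarith : 0 < Ψ y / 2) hM.le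
  refine hc.trans_le (h Ψ hΨ hΨ0 (fun z hz => ?_) (fun z hz => le_of_lt (hball hz)) x
    (mem_closedBall.mpr le_rfl))
  have h1 := hsup z
  have h2 := mul_le_mul_of_nonneg_right (abs_le.mp (hMb z hz)).1 (hΨ0 z)
  linarith

end Rigidity

section LeftMonotonicity

variable {d : ℕ} {a : Euc d → Matrix (Fin d) (Fin d) ℝ} {b : Euc d → Euc d} {W Ψ φ : Euc d → ℝ}

/-- A positive solution times a steep barrier is a subsolution away from the barrier's centre. -/
lemma StandingH.exists_mul_subsolution (hst : StandingH a b) (hΨ : ContDiff ℝ 2 Ψ)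
    (hΨ0 : ∀ x, 0 < Ψ x) (hsol : ∀ x, Lop a b Ψ x + W x * Ψ x = 0) (x₀ : Euc d) {r ρ : ℝ}
    (hr : 0 < r) (hρ : 0 ≤ ρ) :
    ∃ q : Euc d → ℝ, ContDiff ℝ 2 q ∧ (∀ x, 0 ≤ q x) ∧ (∃ T > 0, ∀ x, q x ≤ T) ∧
      (∀ x, r ≤ dist x x₀ → 0 ≤ Lop a b (fun x => Ψ x * q x) x + W x * (Ψ x * q x)) ∧
      ∀ x ∈ closedBall x₀ ρ, r ≤ dist x x₀ →
        1 ≤ Lop a b (fun x => Ψ x * q x) x + W x * (Ψ x * q x) := by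
  set p := parab x₀ (ρ + 1) with hp
  have hpC := contDiff_parab x₀ (ρ + 1)
  obtain ⟨θ, hθ, hθb⟩ := hst.exists_le_Gam_parab x₀ (ρ + 1) (ρ + 1) hr
  obtain ⟨c, hc, hcb⟩ := hΨ.continuous.exists_pos_le hΨ0 x₀ (ρ + 1)
  have hcont : Continuous fun x => p x * (Ψ x * Lop a b p x + 2 * Gam a Ψ p x) :=
    hpC.continuous.mul ((hΨ.continuous.mul (hst.continuous_Lop hpC)).add
      (continuous_const.mul (hst.continuous_Gam hΨ hpC)))
  obtain ⟨C, hC, hCb⟩ := hcont.exists_pos_abs_le x₀ (ρ + 1)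
  obtain ⟨n, hn⟩ := exists_nat_ge ((C + 1) / (c * θ))
  rw [div_le_iff₀ (by positivity)] at hn
  have hpT : ∀ x, p x ≤ (ρ + 1) ^ 2 := fun x => by
    rw [hp, parab_eq_sq_sub_sq]; linarith [sq_nonneg (dist x x₀)]
  have hN : ∀ x, Lop a b (fun x => Ψ x * barrier x₀ (ρ + 1) n x) x
      + W x * (Ψ x * barrier x₀ (ρ + 1) n x) = ((n : ℝ) + 3) * max (p x) 0 ^ (n + 1) *
        (max (p x) 0 * (Ψ x * Lop a b p x + 2 * Gam a Ψ p x)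
          + ((n : ℝ) + 2) * (Ψ x * Gam a p p x)) := by
    intro x
    have h1 := hsol x
    rw [Lop_mul hΨ.contDiffAt (contDiff_barrier x₀ (ρ + 1) n).contDiffAt,
      Gam_comm (u := barrier x₀ (ρ + 1) n) (hst.posdef x), Gam_barrier_right, Lop_barrier, ← hp]
    linear_combination barrier x₀ (ρ + 1) n x * h1
  have hbr : ∀ x, dist x x₀ ≤ ρ + 1 → r ≤ dist x x₀ →
      0 ≤ p x ∧ 1 ≤ p x * (Ψ x * Lop a b p x + 2 * Gam a Ψ p x)
        + ((n : ℝ) + 2) * (Ψ x * Gam a p p x) := by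
    intro x hx hxr
    have hx' : x ∈ closedBall x₀ (ρ + 1) := mem_closedBall.mpr hx
    have h1 := (abs_le.mp (hCb x hx')).1
    have h2 : c * θ ≤ Ψ x * Gam a p p x :=
      mul_le_mul (hcb x hx') (hθb x hx' hxr) hθ.le (hΨ0 x).le
    have h3 : (n : ℝ) * (c * θ) ≤ ((n : ℝ) + 2) * (Ψ x * Gam a p p x) := by
      have : 0 < c * θ := by positivity
      exact mul_le_mul (by linarith) h2 this.le (by positivity)
    refine ⟨?_, by linarith⟩
    rw [hp, parab_eq_sq_sub_sq]
    nlinarith [dist_nonneg (x := x) (y := x₀)]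
  refine ⟨barrier x₀ (ρ + 1) n, contDiff_barrier _ _ _, barrier_nonneg _ _ _,
    ⟨((ρ + 1) ^ 2) ^ (n + 3), by positivity, fun x =>
      pow_le_pow_left₀ (le_max_right _ _) (max_le (hpT x) (by positivity)) _⟩, ?_, ?_⟩
  · intro x hxr
    rw [hN]
    rcases le_or_gt (dist x x₀) (ρ + 1) with hx | hx
    · obtain ⟨h1, h2⟩ := hbr x hx hxr
      rw [max_eq_left h1]
      exact mul_nonneg (by positivity) (by linarith)
    · have : p x ≤ 0 := by
        rw [hp, parab_eq_sq_sub_sq]; nlinarith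
      rw [max_eq_right this]
      simp
  · intro x hx hxr
    rw [mem_closedBall] at hx
    obtain ⟨h1, h2⟩ := hbr x (by linarith) hxr
    have h3 : 1 ≤ p x := by
      rw [hp, parab_eq_sq_sub_sq]; nlinarith [dist_nonneg (x := x) (y := x₀)]
    rw [hN, max_eq_left h1]
    refine one_le_mul_of_one_le_of_one_le (one_le_mul_of_one_le_of_one_le ?_ (one_le_pow₀ h3)) h2
    have : (0 : ℝ) ≤ n := Nat.cast_nonneg n
    linarith

/-- Lowering the potential of an operator with a positive solution dominated by an exterior strict
supersolution produces a global strict supersolution. -/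
lemma StandingH.exists_strict_supersolution_sub (hst : StandingH a b) (hW : Continuous W)
    (hΨ : ContDiff ℝ 2 Ψ) (hΨ0 : ∀ x, 0 < Ψ x) (hsol : ∀ x, Lop a b Ψ x + W x * Ψ x = 0)
    (hφ : ContDiff ℝ 2 φ) (hφ0 : ∀ x, 0 < φ x) {R₀ δ B : ℝ} (hδ : 0 < δ)
    (hφs : ∀ x, R₀ < ‖x‖ → Lop a b φ x + W x * φ x ≤ -δ * φ x) (hB : 0 < B)
    (hΨφ : ∀ x, Ψ x ≤ B * φ x) {h : Euc d → ℝ} (hh : Continuous h) (hh0 : ∀ x, 0 ≤ h x)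
    (hne : ∃ x, h x ≠ 0) :
    ∃ γ > 0, ∃ w : Euc d → ℝ, ContDiff ℝ 2 w ∧ (∀ x, 0 < w x) ∧
      ∀ x, Lop a b w x + (W x - h x) * w x ≤ -γ * w x := by
  obtain ⟨x₀, hx₀⟩ := hne
  have hx₀ : 0 < h x₀ := lt_of_le_of_ne (hh0 x₀) hx₀.symm
  set h₀ := h x₀ / 2 with hh₀
  have hh₀0 : 0 < h₀ := by positivity
  obtain ⟨r, hr, hball⟩ := Metric.nhds_basis_closedBall.mem_iff.mp
    (hh.continuousAt.eventually (lt_mem_nhds (by linarith : h₀ < h x₀)))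
  set ρ := |R₀| + ‖x₀‖ + r with hρ
  have hρ0 : 0 ≤ ρ := by positivity
  have hrρ : r ≤ ρ := by
    have : 0 ≤ |R₀| + ‖x₀‖ := by positivity
    linarith
  obtain ⟨q, hq, hq0, ⟨T, hT, hqT⟩, hN0, hN1⟩ :=
    hst.exists_mul_subsolution hΨ hΨ0 hsol x₀ hr hρ0
  have hΨq : ContDiff ℝ 2 fun x => Ψ x * q x := hΨ.mul hq
  obtain ⟨c, hc, hcb⟩ := hΨ.continuous.exists_pos_le hΨ0 x₀ ρ
  have hcN : Continuous fun x => Lop a b (fun x => Ψ x * q x) x + W x * (Ψ x * q x) :=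
    (hst.continuous_Lop hΨq).add (hW.mul hΨq.continuous)
  have hcφ : Continuous fun x => Lop a b φ x + W x * φ x :=
    (hst.continuous_Lop hφ).add (hW.mul hφ.continuous)
  obtain ⟨D, hD, hDb⟩ := hcN.exists_pos_abs_le x₀ ρ
  obtain ⟨E, hE, hEb⟩ := hcφ.exists_pos_abs_le x₀ ρ
  obtain ⟨Φ, hΦ, hΦb⟩ := hφ.continuous.exists_pos_abs_le x₀ ρ
  set ε₂ := min (1 / (2 * T)) (h₀ * c / (8 * D)) with hε₂
  have hε₂0 : 0 < ε₂ := lt_min (by positivity) (by positivity)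
  have hε₂T : ε₂ * (2 * T) ≤ 1 := by
    rw [← le_div_iff₀ (by positivity)]; exact min_le_left _ _
  have hε₂D : ε₂ * (8 * D) ≤ h₀ * c := by
    rw [← le_div_iff₀ (by positivity)]; exact min_le_right _ _
  set ε₁ := min 1 (min (h₀ * c / (8 * E)) (ε₂ / (2 * E))) with hε₁
  have hε₁0 : 0 < ε₁ := lt_min one_pos (lt_min (by positivity) (by positivity))
  have hε₁1 : ε₁ ≤ 1 := min_le_left _ _
  have hε₁E : ε₁ * (8 * E) ≤ h₀ * c := by
    rw [← le_div_iff₀ (by positivity)]; exact (min_le_right _ _).trans (min_le_left _ _)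
  have hε₁E' : ε₁ * (2 * E) ≤ ε₂ := by
    rw [← le_div_iff₀ (by positivity)]; exact (min_le_right _ _).trans (min_le_right _ _)
  set σ := min (h₀ * c / 4) (ε₂ / 2) with hσ
  have hσ0 : 0 < σ := lt_min (by positivity) (by positivity)
  set γ := min (ε₁ * δ / (B + 1)) (σ / ((B + 1) * Φ)) with hγ
  have hγ0 : 0 < γ := lt_min (by positivity) (by positivity)
  have hγδ : γ * (B + 1) ≤ ε₁ * δ := by
    rw [← le_div_iff₀ (by positivity)]; exact min_le_left _ _
  have hγσ : γ * ((B + 1) * Φ) ≤ σ := by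
    rw [← le_div_iff₀ (by positivity)]; exact min_le_right _ _
  have hlow : ∀ x, Ψ x / 2 + ε₁ * φ x ≤ (Ψ x + ε₁ * φ x) + -ε₂ * (Ψ x * q x) := fun x => by
    have h1 : ε₂ * q x ≤ 1 / 2 := by nlinarith [hqT x]
    nlinarith [hΨ0 x]
  have hup : ∀ x, (Ψ x + ε₁ * φ x) + -ε₂ * (Ψ x * q x) ≤ (B + 1) * φ x := fun x => by
    have h1 : 0 ≤ ε₂ * (Ψ x * q x) := mul_nonneg hε₂0.le (mul_nonneg (hΨ0 x).le (hq0 x))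
    nlinarith [hΨφ x, hφ0 x]
  have hw0 : ∀ x, 0 < (Ψ x + ε₁ * φ x) + -ε₂ * (Ψ x * q x) := fun x => by
    have h1 := hlow x
    have h2 := hΨ0 x
    have h3 := mul_pos hε₁0 (hφ0 x)
    linarith
  refine ⟨γ, hγ0, fun x => (Ψ x + ε₁ * φ x) + -ε₂ * (Ψ x * q x),
    (hΨ.add (contDiff_const.mul hφ)).add (contDiff_const.mul hΨq), hw0, fun x => ?_⟩
  rw [Lop_add (hΨ.contDiffAt.add (contDiffAt_const.mul hφ.contDiffAt))
    (contDiffAt_const.mul hΨq.contDiffAt), Lop_add hΨ.contDiffAt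
    (contDiffAt_const.mul hφ.contDiffAt), Lop_const_mul _ hφ.contDiffAt,
    Lop_const_mul _ hΨq.contDiffAt]
  set w := (Ψ x + ε₁ * φ x) + -ε₂ * (Ψ x * q x) with hw
  set N := Lop a b (fun x => Ψ x * q x) x + W x * (Ψ x * q x) with hNdef
  set F := Lop a b φ x + W x * φ x with hF
  have hw0x : 0 < w := hw0 x
  have hsplit : Lop a b Ψ x + ε₁ * Lop a b φ x + -ε₂ * Lop a b (fun x => Ψ x * q x) x
      + (W x - h x) * w = ε₁ * F - ε₂ * N - h x * w := by
    rw [hF, hNdef, hw]; linear_combination hsol x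
  rw [hsplit]
  rcases le_or_gt (dist x x₀) ρ with hx | hx
  · have hx' : x ∈ closedBall x₀ ρ := mem_closedBall.mpr hx
    have h1 : ε₁ * F ≤ ε₁ * E :=
      mul_le_mul_of_nonneg_left ((le_abs_self _).trans (hEb x hx')) hε₁0.le
    have h2 : γ * w ≤ σ := by
      refine le_trans (mul_le_mul_of_nonneg_left ((hup x).trans ?_) hγ0.le) hγσ
      exact mul_le_mul_of_nonneg_left ((le_abs_self _).trans (hΦb x hx')) (by linarith)
    suffices h3 : ε₁ * F - ε₂ * N - h x * w ≤ -σ by linarith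
    rcases le_or_gt r (dist x x₀) with hxr | hxr
    · have h3 := mul_le_mul_of_nonneg_left (hN1 x hx' hxr) hε₂0.le
      have h4 := mul_nonneg (hh0 x) hw0x.le
      have h5 : σ ≤ ε₂ / 2 := min_le_right _ _
      linarith
    · have h3 := mul_le_mul_of_nonneg_left (abs_le.mp (hDb x hx')).1 hε₂0.le
      have h4 : h₀ * (c / 2) ≤ h x * w := by
        refine mul_le_mul (le_of_lt (hball (mem_closedBall.mpr hxr.le))) ?_ (by positivity) (hh0 x)
        have := hlow x
        have := hcb x hx'
        have := mul_pos hε₁0 (hφ0 x)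
        linarith
      have h5 : σ ≤ h₀ * c / 4 := min_le_left _ _
      linarith
  · have hxR : R₀ < ‖x‖ := by
      rw [dist_eq_norm] at hx
      have := norm_sub_le x x₀
      have := le_abs_self R₀
      linarith
    have h1 := mul_le_mul_of_nonneg_left (hφs x hxR) hε₁0.le
    have h2 := mul_nonneg hε₂0.le (hN0 x (by linarith))
    have h3 := mul_nonneg (hh0 x) hw0x.le
    have h4 := mul_le_mul_of_nonneg_left (hup x) hγ0.le
    have h5 := mul_le_mul_of_nonneg_right hγδ (hφ0 x).le
    linarith

end LeftMonotonicity

section Spectral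

variable {d : ℕ} {a : Euc d → Matrix (Fin d) (Fin d) ℝ} {b : Euc d → Euc d}
  {V V' W Ψ φ : Euc d → ℝ}

lemma mem_supersolutions_univ {lam : ℝ} : lam ∈ supersolutions a b V univ ↔
    ∃ φ : Euc d → ℝ, (∀ x, 0 < φ x) ∧ ContDiff ℝ 2 φ ∧
      ∀ x, Lop a b φ x + V x * φ x ≤ lam * φ x := by
  simp [supersolutions, contDiffOn_univ]

lemma add_mem_supersolutions {lam H : ℝ} (h : lam ∈ supersolutions a b V univ)
    (hV : ∀ x, V' x ≤ V x + H) : lam + H ∈ supersolutions a b V' univ := by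
  obtain ⟨φ, hφ0, hφ, hs⟩ := mem_supersolutions_univ.mp h
  refine mem_supersolutions_univ.mpr ⟨φ, hφ0, hφ, fun x => ?_⟩
  have h1 := mul_le_mul_of_nonneg_right (hV x) (hφ0 x).le
  linarith [hs x]

lemma lamStarFinite.of_abs_sub_le {H : ℝ} (hfin : lamStarFinite a b V univ)
    (hV : ∀ x, |V' x - V x| ≤ H) : lamStarFinite a b V' univ := by
  obtain ⟨⟨l, hl⟩, m, hm⟩ := hfin
  refine ⟨⟨l + H, add_mem_supersolutions hl fun x => ?_⟩, m - H, fun μ hμ => ?_⟩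
  · linarith [(abs_le.mp (hV x)).2]
  · have := hm (add_mem_supersolutions (V' := V) (H := H) hμ fun x => by
      linarith [(abs_le.mp (hV x)).1])
    linarith

lemma C0plus.exists_le {h : Euc d → ℝ} (hh : C0plus h) : ∃ H, ∀ x, |h x| ≤ H := by
  obtain ⟨hc, -, -, hlim⟩ := hh
  obtain ⟨R, hR⟩ := exists_radius_of_eventually_cocompact
    (hlim.eventually (Metric.ball_mem_nhds 0 one_pos))
  obtain ⟨C, -, hC⟩ := hc.exists_pos_abs_le 0 R
  refine ⟨max C 1, fun x => ?_⟩
  rcases le_or_gt ‖x‖ R with hx | hx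
  · exact (hC x (by simpa using hx)).trans (le_max_left _ _)
  · have : |h x| < 1 := by simpa using hR x hx
    exact this.le.trans (le_max_right _ _)

lemma C0plus_inv_one_add_norm : C0plus fun x : Euc d => (1 + ‖x‖)⁻¹ := by
  refine ⟨(continuous_const.add continuous_norm).inv₀
      fun x => ne_of_gt (add_pos_of_pos_of_nonneg one_pos (norm_nonneg x)),
    fun x => by positivity, ⟨0, by simp⟩, ?_⟩
  exact (tendsto_atTop_add_const_left _ _
    (tendsto_norm_cocompact_atTop (E := Euc d))).inv_tendsto_atTop

/-- Strict monotonicity on the left provides a positive function which is a strict supersolution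
near infinity, also for perturbed operators. -/
lemma exists_exterior_supersolution {a₁ : Euc d → Matrix (Fin d) (Fin d) ℝ}
    {b₁ : Euc d → Euc d} {V₁ : Euc d → ℝ} (hfin : lamStarFinite a₁ b₁ V₁ univ)
    (hmono : StrictMonoAt a₁ b₁ V₁)
    (hcoef : ∀ᶠ x in cocompact (Euc d), a₁ x = a x ∧ b₁ x = b x)
    (hV : Tendsto (fun x => V₁ x - V x) (cocompact (Euc d)) (nhds 0)) :
    ∃ φ : Euc d → ℝ, ContDiff ℝ 2 φ ∧ (∀ x, 0 < φ x) ∧ ∃ R₀, ∃ δ > 0, ∀ x, R₀ < ‖x‖ →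
      Lop a b φ x + (V x - lamStar a₁ b₁ V₁ univ) * φ x ≤ -δ * φ x := by
  have hC0 := C0plus_inv_one_add_norm (d := d)
  obtain ⟨H, hH⟩ := hC0.exists_le
  have hlt := (hmono _ hC0).1
  have hne := (hfin.of_abs_sub_le (V' := fun x => V₁ x - (1 + ‖x‖)⁻¹) (H := H)
    fun x => by simpa using hH x).1
  obtain ⟨μ, hμ, hμlt⟩ := exists_lt_of_csInf_lt hne hlt
  obtain ⟨φ, hφ0, hφ, hs⟩ := mem_supersolutions_univ.mp hμ
  set lam := lamStar a₁ b₁ V₁ univ with hlam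
  set δ := (lam - μ) / 3 with hδ
  have hδ0 : 0 < δ := by linarith
  obtain ⟨R₀, hR₀⟩ := exists_radius_of_eventually_cocompact (hcoef.and
    ((hC0.2.2.2.eventually (gt_mem_nhds hδ0)).and
      (hV.eventually (lt_mem_nhds (by linarith : -δ < 0)))))
  refine ⟨φ, hφ, hφ0, R₀, δ, hδ0, fun x hx => ?_⟩
  obtain ⟨⟨e1, e2⟩, e3, e4⟩ := hR₀ x hx
  have h1 := hs x
  rw [Lop_congr_coeff e1 e2] at h1
  have h2 := mul_pos (sub_pos.mpr e3) (hφ0 x)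
  have h3 := mul_pos (sub_pos.mpr e4) (hφ0 x)
  have h4 : lam = μ + 3 * δ := by rw [hδ]; ring
  rw [h4]
  linarith

lemma ExteriorComparison.exists_le_mul (hcmp : ExteriorComparison a b W Ψ)
    (hΨ : ContDiff ℝ 2 Ψ) (hφ : ContDiff ℝ 2 φ) (hφ0 : ∀ x, 0 < φ x) {R₀ δ : ℝ} (hδ : 0 < δ)
    (hφs : ∀ x, R₀ < ‖x‖ → Lop a b φ x + W x * φ x ≤ -δ * φ x) :
    ∃ B > 0, ∀ x, Ψ x ≤ B * φ x := by
  obtain ⟨B, hB, hBb⟩ :=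
    (hΨ.continuous.div hφ.continuous fun x => (hφ0 x).ne').exists_pos_abs_le 0 (R₀ + 1)
  have hin : ∀ x, ‖x‖ ≤ R₀ + 1 → Ψ x ≤ B * φ x := fun x hx =>
    (div_le_iff₀ (hφ0 x)).mp ((le_abs_self _).trans (hBb x (by simpa using hx)))
  refine ⟨B, hB, fun x => ?_⟩
  rcases le_total ‖x‖ (R₀ + 1) with hx | hx
  · exact hin x hx
  · refine hcmp R₀ (R₀ + 1) δ (fun x => B * φ x) (by linarith) hδ
      (contDiff_const.mul hφ).contDiffOn (fun x _ => mul_pos hB (hφ0 x)) (fun x hx => ?_)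
      (fun x hx => hin x hx.le) x hx
    rw [Lop_const_mul _ hφ.contDiffAt]
    nlinarith [hφs x hx]

/-- A positive solution satisfying exterior comparison has minimal growth at infinity. -/
lemma ExteriorComparison.isGroundState (hcmp : ExteriorComparison a b W Ψ)
    (ha : ∀ x, (a x).PosDef) (hΨ : ContDiff ℝ 2 Ψ) (hΨ0 : ∀ x, 0 < Ψ x)
    (hsol : ∀ x, Lop a b Ψ x + W x * Ψ x = 0)
    (hφ : ContDiff ℝ 2 φ) (hφ0 : ∀ x, 0 < φ x) {R₀ δ : ℝ} (hδ : 0 < δ)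
    (hφs : ∀ x, R₀ < ‖x‖ → Lop a b φ x + W x * φ x ≤ -δ * φ x) :
    IsGroundState a b W Ψ univ := by
  refine ⟨fun x _ => hΨ0 x, hΨ.contDiffOn, fun x _ => hsol x, ?_⟩
  intro K hK _ v hv hv0 hvs
  obtain ⟨B, hB, hΨφ⟩ := hcmp.exists_le_mul hΨ hφ hφ0 hδ hφs
  obtain ⟨R', hR'⟩ := exists_radius_of_isCompact hK
  set R₁ := max R₀ R' with hR₁
  have hout : ∀ x : Euc d, R₁ < ‖x‖ → x ∈ univ \ K := fun x hx =>
    ⟨mem_univ x, hR' x ((le_max_right _ _).trans_lt hx)⟩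
  have hvC : ContinuousOn (fun x => Ψ x / v x) (sphere (0 : Euc d) (R₁ + 1)) := by
    have hsub : sphere (0 : Euc d) (R₁ + 1) ⊆ univ \ K := fun x hx => hout x (by
      rw [mem_sphere_zero_iff_norm] at hx; linarith)
    exact hΨ.continuous.continuousOn.div (hv.continuousOn.mono hsub) fun x hx =>
      (hv0 x (hsub hx)).ne'
  obtain ⟨A', hA'⟩ := (isCompact_sphere (0 : Euc d) (R₁ + 1)).bddAbove_image hvC
  set A := max A' 1 with hA
  have hA0 : 0 < A := by positivity
  have hΨv : ∀ x, ‖x‖ = R₁ + 1 → Ψ x ≤ A * v x := fun x hx => by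
    have h1 : Ψ x / v x ≤ A' := hA' ⟨x, by simpa using hx, rfl⟩
    exact (div_le_iff₀ (hv0 x (hout x (by linarith)))).mp (h1.trans (le_max_left _ _))
  have hvAt : ∀ x, R₁ < ‖x‖ → ContDiffAt ℝ 2 v x := fun x hx =>
    (hv.mono hout).contDiffAt ((isOpen_lt_norm R₁).mem_nhds hx)
  have hmain : ∀ x, R₁ + 1 ≤ ‖x‖ → Ψ x ≤ A * v x := by
    intro x hx
    have hlim : Tendsto (fun α : ℝ => A * v x + (1 - α) * B * φ x) (nhdsWithin 1 (Iio 1))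
        (nhds (A * v x + (1 - 1) * B * φ x)) := by
      refine (Continuous.tendsto ?_ 1).mono_left nhdsWithin_le_nhds
      fun_prop
    have hev : ∀ᶠ α : ℝ in nhdsWithin 1 (Iio 1), Ψ x ≤ A * v x + (1 - α) * B * φ x := by
      filter_upwards [Ioo_mem_nhdsLT (zero_lt_one' ℝ)] with α hα
      exact hcmp.le_add (w := fun x => A * v x) (η := 0) ha (by linarith : R₁ < R₁ + 1) hφ hφ0
        (fun x hx => hφs x ((le_max_left _ _).trans_lt hx))
        (contDiffOn_const.mul (hv.mono hout)) (fun x hx => mul_pos hA0 (hv0 x (hout x hx)))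
        (fun x hx => by
          rw [Lop_const_mul _ (hvAt x hx)]
          nlinarith [hvs x (hout x hx)])
        hB hα.1 hα.2 (by nlinarith [hα.2]) hΨv (fun x _ => hΨφ x) x hx
    have := ge_of_tendsto hlim hev
    simpa using this
  refine ⟨K ∪ closedBall 0 (R₁ + 1), hK.union (isCompact_closedBall _ _), subset_union_left,
    subset_univ _, A⁻¹, by positivity, fun x hx => ?_⟩
  have hx' : R₁ + 1 < ‖x‖ := by
    by_contra! h
    exact hx.2 (Or.inr (by simpa using h))
  rw [inv_mul_le_iff₀ hA0]
  exact hmain x hx'.le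

end Spectral

/-- Theorem 2.4: transfer of strict monotonicity of the principal eigenvalue under
small perturbations. -/
theorem statement4 {d : ℕ} (hd : 1 ≤ d)
    (a₁ a₂ : Euc d → Matrix (Fin d) (Fin d) ℝ) (b₁ b₂ : Euc d → Euc d) (V₁ V₂ : Euc d → ℝ)
    (hstand₁ : StandingH a₁ b₁) (hstand₂ : StandingH a₂ b₂)
    (hV₁reg : LocallyHolder V₁) (hV₂reg : LocallyHolder V₂)
    (hV₁bdd : ∃ m, ∀ x, m ≤ V₁ x) (hV₂bdd : ∃ m, ∀ x, m ≤ V₂ x)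
    (hfin₁ : lamStarFinite a₁ b₁ V₁ Set.univ) (hfin₂ : lamStarFinite a₂ b₂ V₂ Set.univ)
    (hpert : ∃ K : Set (Euc d), IsCompact K ∧ ∀ x ∉ K, a₁ x = a₂ x ∧ b₁ x = b₂ x)
    (hVdiff : Tendsto (fun x => V₁ x - V₂ x) (cocompact (Euc d)) (nhds 0))
    (hmono₁ : StrictMonoAt a₁ b₁ V₁)
    (Ψ₁ : Euc d → ℝ)
    (hgs₁ : IsGroundState a₁ b₁ (fun x => V₁ x - lamStar a₁ b₁ V₁ Set.univ) Ψ₁ Set.univ)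
    (hlam : lamStar a₂ b₂ V₂ Set.univ ≤ lamStar a₁ b₁ V₁ Set.univ)
    (Ψ : Euc d → ℝ) (hΨC2 : ContDiff ℝ 2 Ψ) (hΨplus : ∃ x, 0 < Ψ x)
    (hsub : ∀ x, lamStar a₁ b₁ V₁ Set.univ * Ψ x ≤ Lop a₂ b₂ Ψ x + V₂ x * Ψ x)
    (C : ℝ) (hC : 0 < C) (hbound : ∀ x, max (Ψ x) 0 ≤ C * Ψ₁ x) :
    StrictMonoAt a₂ b₂ V₂ ∧
    lamStar a₁ b₁ V₁ Set.univ = lamStar a₂ b₂ V₂ Set.univ ∧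
    ∃ (u : Euc d → ℝ) (κ : ℝ), 0 < κ ∧
      IsGroundState a₂ b₂ (fun x => V₂ x - lamStar a₂ b₂ V₂ Set.univ) u Set.univ ∧
      ∀ x, Ψ x = κ * u x := by
  set lam := lamStar a₁ b₁ V₁ univ with hlam₁
  have hcoef : ∀ᶠ x in cocompact (Euc d), a₁ x = a₂ x ∧ b₁ x = b₂ x := by
    obtain ⟨K, hK, h⟩ := hpert
    filter_upwards [hK.compl_mem_cocompact] with x hx using h x hx
  have hW : Continuous fun x => V₂ x - lam := hV₂reg.continuous.sub continuous_const
  have ha := hstand₂.posdef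
  have hsub' : ∀ x, 0 ≤ Lop a₂ b₂ Ψ x + (V₂ x - lam) * Ψ x := fun x => by linarith [hsub x]
  have hcmp : ExteriorComparison a₂ b₂ (fun x => V₂ x - lam) Ψ :=
    exteriorComparison_of_isGroundState hgs₁ hcoef (by simpa using hVdiff) ha hΨC2 hsub' hC hbound
  obtain ⟨φ, hφ, hφ0, R₀, δ, hδ, hφs⟩ :=
    exists_exterior_supersolution hfin₁ hmono₁ hcoef hVdiff
  obtain ⟨R, htouch⟩ := hcmp.exists_touching ha hΨC2 hΨplus hφ hφ0 hδ hφs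
  have hrigid : ∀ h : Euc d → ℝ, Continuous h → (∀ x, 0 ≤ h x) →
      (supersolutions a₂ b₂ (fun x => V₂ x + h x) univ).Nonempty →
      lamStar a₂ b₂ (fun x => V₂ x + h x) univ ≤ lam →
      (∀ x, 0 ≤ Lop a₂ b₂ Ψ x + (V₂ x - lam + h x) * Ψ x) →
      ∀ x, 0 ≤ Ψ x ∧ Lop a₂ b₂ Ψ x + (V₂ x - lam + h x) * Ψ x ≤ 0 := by
    intro h hh hh0 hne hle hQ
    refine hstand₂.nonneg_and_supersolution_of_touching hW hΨC2 hφ hφ0 hh hQ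
      (htouch h hh0 fun η hη => ?_)
    obtain ⟨μ, hμ, hμlt⟩ := exists_lt_of_csInf_lt hne (hle.trans_lt (by linarith : lam < lam + η))
    obtain ⟨w, hw0, hw, hws⟩ := mem_supersolutions_univ.mp hμ
    refine ⟨w, hw, hw0, fun x => ?_⟩
    have h1 := mul_le_mul_of_nonneg_right hμlt.le (hw0 x).le
    linarith [hws x]
  have hzero := hrigid (fun _ => 0) continuous_const (fun _ => le_rfl) (by simpa using hfin₂.1)
    (by simpa using hlam) (by simpa using hsub')
  have hsol : ∀ x, Lop a₂ b₂ Ψ x + (V₂ x - lam) * Ψ x = 0 := fun x =>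
    le_antisymm (by simpa using (hzero x).2) (hsub' x)
  have hΨ0 : ∀ x, 0 < Ψ x := hstand₂.pos_of_nonneg_of_solution hW hΨC2 hΨplus
    (fun x => (hzero x).1) fun x => (hsol x).le
  -- raising the potential raises the principal eigenvalue above `lam`
  have hraise : ∀ h : Euc d → ℝ, Continuous h → (∀ x, 0 ≤ h x) → (∃ x, h x ≠ 0) →
      (supersolutions a₂ b₂ (fun x => V₂ x + h x) univ).Nonempty →
      lam < lamStar a₂ b₂ (fun x => V₂ x + h x) univ := by
    intro h hh hh0 ⟨x, hx⟩ hne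
    by_contra! hle
    have h1 := (hrigid h hh hh0 hne hle (fun y => by
      have := mul_nonneg (hh0 y) (hΨ0 y).le
      linarith [hsol y]) x).2
    have h2 := mul_pos (lt_of_le_of_ne (hh0 x) hx.symm) (hΨ0 x)
    linarith [hsol x]
  have heq : lam = lamStar a₂ b₂ V₂ univ := by
    refine le_antisymm (le_of_forall_pos_le_add fun η hη => ?_) hlam
    obtain ⟨μ, hμ, hμlt⟩ := exists_lt_of_csInf_lt hfin₂.1
      (lt_add_of_pos_right (lamStar a₂ b₂ V₂ univ) (half_pos hη))
    have hmem := add_mem_supersolutions (V' := fun x => V₂ x + η / 2) hμ fun x => le_rfl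
    have h1 := hraise (fun _ => η / 2) continuous_const (fun _ => by positivity)
      ⟨0, by positivity⟩ ⟨_, hmem⟩
    have h2 := csInf_le (hfin₂.of_abs_sub_le (V' := fun x => V₂ x + η / 2) (H := |η / 2|)
      fun x => by simp).2 hmem
    exact (h1.trans_le h2).le.trans (by linarith)
  refine ⟨fun h hh => ?_, heq, Ψ, 1, one_pos, ?_, fun x => by simp⟩
  · obtain ⟨H, hH⟩ := hh.exists_le
    rw [← heq]
    refine ⟨?_, hraise h hh.1 hh.2.1 hh.2.2.1 (hfin₂.of_abs_sub_le (H := H)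
      fun x => by simpa using hH x).1⟩
    obtain ⟨B, hB, hΨφ⟩ := hcmp.exists_le_mul hΨC2 hφ hφ0 hδ hφs
    obtain ⟨γ, hγ, w, hw, hw0, hws⟩ := hstand₂.exists_strict_supersolution_sub hW hΨC2 hΨ0 hsol
      hφ hφ0 hδ hφs hB hΨφ hh.1 hh.2.1 hh.2.2.1
    have hmem : lam - γ ∈ supersolutions a₂ b₂ (fun x => V₂ x - h x) univ :=
      mem_supersolutions_univ.mpr ⟨w, hw0, hw, fun x => by linarith [hws x]⟩
    exact (csInf_le (hfin₂.of_abs_sub_le (H := H) fun x => by simpa using hH x).2 hmem).trans_lt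
      (by linarith)
  · rw [← heq]
    exact hcmp.isGroundState ha hΨC2 hΨ0 hsol hφ hφ0 hδ hφs
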